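/- arXiv:math-ph/0007032 — 2 statements merged into one kernel-verified Lean document; each statement's English description precedes it below -/
import Mathlib

section
/- Global existence for translation-invariant torsion wave maps. For every t₀ ∈ ℝ, every smooth map φ̂ : ℝ → ℝⁿ which is constant outside a compact set, and every smooth compactly supported map θ̂ : ℝ → ℝⁿ, there exists a unique smooth map φ : ℝ × ℝ → ℝⁿ (arguments written (x,t)) satisfying the reduced torsion wave map equation ∂ₓ²φ^A − ∂ₜ²φ^A + Γ^A_{BC}(φ)(∂ₓφ^B ∂ₓφ^C − ∂ₜφ^B ∂ₜφ^C) + 2 λ v_y Q^A_{BC}(φ) ∂ₓφ^B ∂ₜφ^C = 0 for A = 1,…,n (summation over repeated indices) on all of ℝ × ℝ, together with the initial conditions φ(x,t₀) = φ̂(x) and ∂ₜφ(x,t₀) = θ̂(x) for all x ∈ ℝ. -/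
/-!
STATEMENT 0: Global existence and uniqueness for translation-invariant torsion
wave maps in 2+1 dimensions, reduced to 1+1 dimensions, with target `ℝⁿ` in
global coordinates.
-/

open scoped BigOperators

attribute [local instance] Matrix.linftyOpNormedAddCommGroup Matrix.linftyOpNormedSpace

noncomputable section

/-- Partial derivative of a map on `ℝⁿ` in the `B`-th coordinate direction. -/
def pdV {n : ℕ} {E : Type*} [NormedAddCommGroup E] [NormedSpace ℝ E]
    (B : Fin n) (f : (Fin n → ℝ) → E) (q : Fin n → ℝ) : E :=
  fderiv ℝ f q (Pi.single B 1)

/-- Partial derivative in the `x` direction on `ℝ × ℝ` (coordinates `(x,t)`). -/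
def pdx {E : Type*} [NormedAddCommGroup E] [NormedSpace ℝ E]
    (f : ℝ × ℝ → E) (z : ℝ × ℝ) : E :=
  fderiv ℝ f z (1, 0)

/-- Partial derivative in the `t` direction on `ℝ × ℝ` (coordinates `(x,t)`). -/
def pdt {E : Type*} [NormedAddCommGroup E] [NormedSpace ℝ E]
    (f : ℝ × ℝ → E) (z : ℝ × ℝ) : E :=
  fderiv ℝ f z (0, 1)

/-- Christoffel symbols `Γ^A_{BC} = (1/2) g^{AD} (∂_B g_{DC} + ∂_C g_{BD} − ∂_D g_{BC})`. -/
def Gamma {n : ℕ} (g ginv : (Fin n → ℝ) → Matrix (Fin n) (Fin n) ℝ)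
    (A B C : Fin n) (q : Fin n → ℝ) : ℝ :=
  (1 / 2) * ∑ D, ginv q A D *
    (pdV B (fun r => g r D C) q + pdV C (fun r => g r B D) q - pdV D (fun r => g r B C) q)

/-- Torsion tensor `Q^A_{BC} = (1/2) g^{AD} (∂_D p_{BC} + ∂_B p_{CD} + ∂_C p_{DB})`. -/
def Tor {n : ℕ} (ginv p : (Fin n → ℝ) → Matrix (Fin n) (Fin n) ℝ)
    (A B C : Fin n) (q : Fin n → ℝ) : ℝ :=
  (1 / 2) * ∑ D, ginv q A D *
    (pdV D (fun r => p r B C) q + pdV B (fun r => p r C D) q + pdV C (fun r => p r D B) q)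

/-!
In the null coordinates `u = (t - t₀) + x`, `v = (t - t₀) - x` the equation reads
`∂ᵤ∂ᵥφ^A = (κ Q^A_{BC} - Γ^A_{BC})(φ) ∂ᵤφ^B ∂ᵥφ^C` with `κ = λ v_y`, and with `a = ∂ᵤφ`, `b = ∂ᵥφ`
it becomes the first-order characteristic system
`∂ᵥφ = b`, `∂ᵥa = F(φ, a, b)`, `∂ᵤb = F(φ, a, b)` (`isNullSol_iff`).

*Characteristic systems.* For `∂ᵥY = P(Y, Z)`, `∂ᵤZ = Q(Y, Z)` with data on `u + v = 0`, a Volterra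
fixed-point argument in a weighted norm solves the problem globally when `P` and `Q` are
Lipschitz (`exists_isCharSol`). The difference of two solutions solves a linear system of the same
type, whence uniqueness for `C¹` functions `P` and `Q` (`IsCharSol.unique`). The transversal
derivatives `∂ᵤY` and `∂ᵥZ` are obtained as limits of difference quotients, which solve a linear
equation depending continuously on the increment; adjoining them to the unknowns gives again a
characteristic system, and iterating this gives smoothness for smooth `P`, `Q` and data
(`IsCharSol.contDiff`).

*Conservation laws.* The right-hand side says that `a` is parallel along the curves
`v ↦ φ(u, v)` for the connection `Γ - κ Q`, which is metric because `g_{AD} Q^D_{BC}` is totally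
antisymmetric; so `g_{AB}(φ) a^A a^B` does not depend on `v` (`hasDerivAt_energy`). Exchanging the
null directions replaces `κ` by `-κ`, so `g_{AB}(φ) b^A b^B` does not depend on `u`. As `g⁻¹` is
bounded, the energy controls the gradient (`sq_le_energy`): `|a|` and `|b|` are bounded a priori by
the data, which are bounded because `φ̂'` and `θ̂` have compact support.

*Global existence.* Truncating `F` in `a` and `b` outside a ball larger than the a priori bound
makes it globally Lipschitz, since `g`, `g⁻¹`, `p` have bounded derivatives. The truncated system
has a global smooth solution, and an induction over strips `|u + v| ≤ k ε` (`bootstrap_step`) shows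
that it never reaches the truncation (`exists_isNullSol`).
-/

/-! ### A Volterra fixed point theorem for characteristic systems -/

lemma abs_integral_exp_le {M : ℝ} (hM : 0 < M) (u v : ℝ) :
    |∫ s in (-u)..v, Real.exp (M * |u + s|)| ≤ Real.exp (M * |u + v|) / M := by
  rcases le_total (-u) v with h | h
  · have h1 : ∫ s in (-u)..v, Real.exp (M * |u + s|)
        = Real.exp (M * (u + v)) / M - Real.exp (M * (u + -u)) / M := by
      rw [← intervalIntegral.integral_eq_sub_of_hasDerivAt
        (f := fun s => Real.exp (M * (u + s)) / M) (f' := fun s => Real.exp (M * (u + s)))]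
      · apply intervalIntegral.integral_congr
        intro s hs
        rw [Set.uIcc_of_le h] at hs
        dsimp only
        rw [abs_of_nonneg (by linarith [hs.1])]
      · intro s _
        have := ((((hasDerivAt_id s).const_add u).const_mul M).exp).div_const M
        refine HasDerivAt.congr_deriv this ?_
        simp [hM.ne']
      · exact Continuous.intervalIntegrable (by fun_prop) _ _
    have h2 : Real.exp (M * (u + -u)) / M ≤ Real.exp (M * (u + v)) / M := by
      gcongr
    have h3 : 0 < Real.exp (M * (u + -u)) / M := by positivity
    rw [h1, abs_of_nonneg (a := u + v) (by linarith), abs_of_nonneg (by linarith)]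
    linarith
  · have h1 : ∫ s in (-u)..v, Real.exp (M * |u + s|)
        = (-Real.exp (-(M * (u + v))) / M) - (-Real.exp (-(M * (u + -u))) / M) := by
      rw [← intervalIntegral.integral_eq_sub_of_hasDerivAt
        (f := fun s => -Real.exp (-(M * (u + s))) / M) (f' := fun s => Real.exp (-(M * (u + s))))]
      · apply intervalIntegral.integral_congr
        intro s hs
        rw [Set.uIcc_of_ge h] at hs
        dsimp only
        rw [abs_of_nonpos (by linarith [hs.2]), mul_neg]
      · intro s _
        have := (((((hasDerivAt_id s).const_add u).const_mul M).neg.exp).neg).div_const M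
        refine HasDerivAt.congr_deriv this ?_
        simp [hM.ne']
      · exact Continuous.intervalIntegrable (by fun_prop) _ _
    have h2 : Real.exp (-(M * (u + -u))) / M ≤ Real.exp (-(M * (u + v))) / M := by
      gcongr
    have h3 : 0 < Real.exp (-(M * (u + -u))) / M := by positivity
    have h4 : (-Real.exp (-(M * (u + v))) / M) - (-Real.exp (-(M * (u + -u))) / M)
      = Real.exp (-(M * (u + -u))) / M - Real.exp (-(M * (u + v))) / M := by ring
    rw [h1, h4, abs_of_nonpos (a := u + v) (by linarith), abs_of_nonpos (by linarith), mul_neg]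
    linarith

/-- The integral operator of the characteristic system `Y_v = P(p, Y, Z)`, `Z_u = Q(p, Y, Z)` with
data on the antidiagonal `u + v = 0`; points are `p = (h, u, v)`, where `h` is a parameter, and
`D` collects the values prescribed on the antidiagonal. -/
def volt {E F : Type} [NormedAddCommGroup E] [NormedSpace ℝ E]
    [NormedAddCommGroup F] [NormedSpace ℝ F]
    (P : ℝ × ℝ × ℝ → E × F → E) (Q : ℝ × ℝ × ℝ → E × F → F) (D : ℝ × ℝ × ℝ → E × F)
    (f : ℝ × ℝ × ℝ → E × F) (p : ℝ × ℝ × ℝ) : E × F :=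
  ((D p).1 + ∫ s in (-p.2.1)..p.2.2, P (p.1, p.2.1, s) (f (p.1, p.2.1, s)),
   (D p).2 + ∫ s in (-p.2.2)..p.2.1, Q (p.1, s, p.2.2) (f (p.1, s, p.2.2)))

/-- The cube of half-side `r` in the space of points `(h, u, v)`. -/
def cube (r : ℝ) : Set (ℝ × ℝ × ℝ) :=
  Set.Icc (-r) r ×ˢ Set.Icc (-r) r ×ˢ Set.Icc (-r) r

lemma isCompact_cube (r : ℝ) : IsCompact (cube r) :=
  isCompact_Icc.prod (isCompact_Icc.prod isCompact_Icc)

lemma cube_mem_nhds (p : ℝ × ℝ × ℝ) : ∃ r : ℝ, cube r ∈ nhds p := by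
  refine ⟨‖p‖ + 1, ?_⟩
  have h1 := norm_fst_le p
  have h2 := norm_snd_le p
  have h3 := norm_fst_le p.2
  have h4 := norm_snd_le p.2
  simp only [Real.norm_eq_abs, abs_le] at h1 h3 h4
  refine prod_mem_nhds ?_ (prod_mem_nhds ?_ ?_) <;> apply Icc_mem_nhds <;> linarith

/-- A curve segment of the integral operator stays in the cube. -/
lemma cube_seg {r h u v s : ℝ} (hp : (h, u, v) ∈ cube r) (hs : s ∈ Set.uIcc (-u) v) :
    (h, u, s) ∈ cube r := by
  obtain ⟨h1, h2, h3⟩ := hp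
  refine ⟨h1, h2, ?_⟩
  have h2' : -u ∈ Set.Icc (-r) r := ⟨by linarith [h2.2], by linarith [h2.1]⟩
  exact Set.uIcc_subset_Icc h2' h3 hs

lemma cube_seg' {r h u v s : ℝ} (hp : (h, u, v) ∈ cube r) (hs : s ∈ Set.uIcc (-v) u) :
    (h, s, v) ∈ cube r := by
  obtain ⟨h1, h2, h3⟩ := hp
  refine ⟨h1, ?_, h3⟩
  have h2' : -v ∈ Set.Icc (-r) r := ⟨by linarith [h3.2], by linarith [h3.1]⟩
  exact Set.uIcc_subset_Icc h2' h2 hs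

lemma continuous_integral_moving {X E : Type*} [TopologicalSpace X] [NormedAddCommGroup E]
    [NormedSpace ℝ E] {f : X → ℝ → E} (hf : Continuous (Function.uncurry f))
    {a b : X → ℝ} (ha : Continuous a) (hb : Continuous b) :
    Continuous fun x => ∫ s in a x..b x, f x s := by
  have h : (fun x => ∫ s in a x..b x, f x s)
      = fun x => (∫ s in (0 : ℝ)..b x, f x s) - ∫ s in (0 : ℝ)..a x, f x s := by
    funext x
    have hc : Continuous (f x) := hf.comp (Continuous.prodMk_right x)
    rw [intervalIntegral.integral_interval_sub_left]
    · exact hc.intervalIntegrable _ _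
    · exact hc.intervalIntegrable _ _
  rw [h]
  exact (intervalIntegral.continuous_parametric_intervalIntegral_of_continuous hf hb).sub
    (intervalIntegral.continuous_parametric_intervalIntegral_of_continuous hf ha)

section Volterra

variable {E F : Type} [NormedAddCommGroup E] [NormedSpace ℝ E]
    [NormedAddCommGroup F] [NormedSpace ℝ F]

lemma continuous_volt {P : ℝ × ℝ × ℝ → E × F → E} {Q : ℝ × ℝ × ℝ → E × F → F}
    {D : ℝ × ℝ × ℝ → E × F} (hP : Continuous (Function.uncurry P))
    (hQ : Continuous (Function.uncurry Q)) (hD : Continuous D) {f : ℝ × ℝ × ℝ → E × F}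
    (hf : Continuous f) : Continuous (volt P Q D f) := by
  unfold volt
  refine Continuous.prodMk (Continuous.add (by fun_prop) ?_) (Continuous.add (by fun_prop) ?_)
  · apply continuous_integral_moving _ (by fun_prop) (by fun_prop)
    have : Continuous fun x : (ℝ × ℝ × ℝ) × ℝ => ((x.1.1, x.1.2.1, x.2) : ℝ × ℝ × ℝ) := by
      fun_prop
    exact hP.comp (this.prodMk (hf.comp this))
  · apply continuous_integral_moving _ (by fun_prop) (by fun_prop)
    have : Continuous fun x : (ℝ × ℝ × ℝ) × ℝ => ((x.1.1, x.2, x.1.2.2) : ℝ × ℝ × ℝ) := by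
      fun_prop
    exact hQ.comp (this.prodMk (hf.comp this))

/-- In the sup norm weighted by `exp (M |u + v|)` the operator is a contraction on a cube. -/
lemma volt_contract {P : ℝ × ℝ × ℝ → E × F → E} {Q : ℝ × ℝ × ℝ → E × F → F}
    {D : ℝ × ℝ × ℝ → E × F} (hP : Continuous (Function.uncurry P))
    (hQ : Continuous (Function.uncurry Q)) {r L M : ℝ} (hL : 0 ≤ L) (hM : 0 < M)
    (hLM : 2 * L ≤ M)
    (hPL : ∀ p ∈ cube r, ∀ x y, ‖P p x - P p y‖ ≤ L * ‖x - y‖)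
    (hQL : ∀ p ∈ cube r, ∀ x y, ‖Q p x - Q p y‖ ≤ L * ‖x - y‖)
    {f g : ℝ × ℝ × ℝ → E × F} (hf : Continuous f) (hg : Continuous g) {C : ℝ} (hC : 0 ≤ C)
    (hfg : ∀ p ∈ cube r, ‖f p - g p‖ ≤ C * Real.exp (M * |p.2.1 + p.2.2|)) :
    ∀ p ∈ cube r, ‖volt P Q D f p - volt P Q D g p‖
      ≤ C / 2 * Real.exp (M * |p.2.1 + p.2.2|) := by
  rintro ⟨h, u, v⟩ hp
  have hLC : L * C / M ≤ C / 2 := by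
    rw [div_le_div_iff₀ hM (by norm_num)]
    nlinarith
  have key : ∀ (G : Type) [NormedAddCommGroup G] [NormedSpace ℝ G] (j : ℝ → G) (u v : ℝ),
      (∀ s ∈ Set.uIcc (-u) v, ‖j s‖ ≤ L * C * Real.exp (M * |u + s|)) →
      ‖∫ s in (-u)..v, j s‖ ≤ C / 2 * Real.exp (M * |u + v|) := by
    intro G _ _ j u v hj
    have h1 : ‖∫ s in (-u)..v, j s‖ ≤ |∫ s in (-u)..v, L * C * Real.exp (M * |u + s|)| := by
      apply intervalIntegral.norm_integral_le_abs_of_norm_le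
      · apply (MeasureTheory.ae_restrict_iff' measurableSet_uIoc).2
        exact Filter.Eventually.of_forall fun s hs => hj s (Set.uIoc_subset_uIcc hs)
      · exact Continuous.intervalIntegrable (by fun_prop) _ _
    rw [intervalIntegral.integral_const_mul, abs_mul, abs_of_nonneg (mul_nonneg hL hC)] at h1
    calc _ ≤ _ := h1
      _ ≤ L * C * (Real.exp (M * |u + v|) / M) := by
        gcongr; exact abs_integral_exp_le hM u v
      _ = L * C / M * Real.exp (M * |u + v|) := by ring
      _ ≤ _ := by gcongr
  rw [Prod.norm_def]
  apply max_le
  · simp only [volt, Prod.fst_sub, add_sub_add_left_eq_sub]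
    rw [← intervalIntegral.integral_sub]
    · apply key
      intro s hs
      have := cube_seg hp hs
      calc _ ≤ L * ‖f (h, u, s) - g (h, u, s)‖ := hPL _ this _ _
        _ ≤ L * (C * Real.exp (M * |u + s|)) := by gcongr; exact hfg _ this
        _ = _ := by ring
    all_goals
      apply Continuous.intervalIntegrable
      have hc : Continuous fun s : ℝ => ((h, u, s) : ℝ × ℝ × ℝ) := by fun_prop
      exact hP.comp (hc.prodMk (Continuous.comp (by assumption) hc))
  · simp only [volt, Prod.snd_sub, add_sub_add_left_eq_sub]
    rw [← intervalIntegral.integral_sub]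
    · rw [add_comm u v]
      apply key
      intro s hs
      have := cube_seg' hp hs
      calc _ ≤ L * ‖f (h, s, v) - g (h, s, v)‖ := hQL _ this _ _
        _ ≤ L * (C * Real.exp (M * |s + v|)) := by gcongr; exact hfg _ this
        _ = _ := by rw [add_comm s v]; ring
    all_goals
      apply Continuous.intervalIntegrable
      have hc : Continuous fun s : ℝ => ((h, s, v) : ℝ × ℝ × ℝ) := by fun_prop
      exact hQ.comp (hc.prodMk (Continuous.comp (by assumption) hc))

/-- Lipschitz continuity in the unknown, uniformly on cubes. -/
def LipOnCubes {G H : Type} [NormedAddCommGroup G] [NormedAddCommGroup H]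
    (P : ℝ × ℝ × ℝ → G → H) : Prop :=
  ∀ r : ℝ, ∃ L : ℝ, ∀ p ∈ cube r, ∀ x y, ‖P p x - P p y‖ ≤ L * ‖x - y‖

lemma LipOnCubes.common {G H K : Type} [NormedAddCommGroup G] [NormedAddCommGroup H]
    [NormedAddCommGroup K] {P : ℝ × ℝ × ℝ → G → H} {Q : ℝ × ℝ × ℝ → G → K}
    (hP : LipOnCubes P) (hQ : LipOnCubes Q) (r : ℝ) :
    ∃ L : ℝ, 0 ≤ L ∧ (∀ p ∈ cube r, ∀ x y, ‖P p x - P p y‖ ≤ L * ‖x - y‖) ∧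
      (∀ p ∈ cube r, ∀ x y, ‖Q p x - Q p y‖ ≤ L * ‖x - y‖) := by
  obtain ⟨L₁, h₁⟩ := hP r
  obtain ⟨L₂, h₂⟩ := hQ r
  refine ⟨max 0 (max L₁ L₂), le_max_left _ _, fun p hp x y => (h₁ p hp x y).trans ?_,
    fun p hp x y => (h₂ p hp x y).trans ?_⟩
  · gcongr
    exact (le_max_left _ _).trans (le_max_right _ _)
  · gcongr
    exact (le_max_right _ _).trans (le_max_right _ _)

/-- Uniqueness of the fixed point: iterating `volt_contract` on a cube. -/
theorem volt_unique {P : ℝ × ℝ × ℝ → E × F → E} {Q : ℝ × ℝ × ℝ → E × F → F}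
    {D : ℝ × ℝ × ℝ → E × F} (hP : Continuous (Function.uncurry P))
    (hQ : Continuous (Function.uncurry Q)) (hPL : LipOnCubes P) (hQL : LipOnCubes Q)
    {f g : ℝ × ℝ × ℝ → E × F} (hf : Continuous f) (hg : Continuous g)
    (hf' : volt P Q D f = f) (hg' : volt P Q D g = g) : f = g := by
  funext p
  obtain ⟨r, hr⟩ := cube_mem_nhds p
  have hp := mem_of_mem_nhds hr
  obtain ⟨L, hL, h1, h2⟩ := hPL.common hQL r
  obtain ⟨C, hC⟩ := (isCompact_cube r).exists_bound_of_continuousOn (hf.sub hg).continuousOn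
  have hC0 : 0 ≤ C := (norm_nonneg _).trans (hC p hp)
  have key : ∀ k : ℕ, ∀ p ∈ cube r,
      ‖f p - g p‖ ≤ C * (1 / 2) ^ k * Real.exp ((2 * L + 1) * |p.2.1 + p.2.2|) := by
    intro k
    induction k with
    | zero =>
      intro p hp
      simp only [pow_zero, mul_one]
      calc _ ≤ C := hC p hp
        _ ≤ _ := le_mul_of_one_le_right hC0 (Real.one_le_exp (by positivity))
    | succ k ih =>
      intro p hp
      have := volt_contract (D := D) hP hQ hL (by positivity : 0 < 2 * L + 1) (by linarith)
        h1 h2 hf hg (by positivity) ih p hp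
      rw [hf', hg'] at this
      convert this using 1
      ring
  have hlim : Filter.Tendsto (fun k : ℕ => C * (1 / 2 : ℝ) ^ k *
      Real.exp ((2 * L + 1) * |p.2.1 + p.2.2|)) Filter.atTop (nhds 0) := by
    have := ((tendsto_pow_atTop_nhds_zero_of_lt_one (r := (1 / 2 : ℝ)) (by norm_num)
      (by norm_num)).const_mul C).mul_const (Real.exp ((2 * L + 1) * |p.2.1 + p.2.2|))
    simpa using this
  have := ge_of_tendsto' hlim (fun k => key k p hp)
  exact sub_eq_zero.1 (norm_le_zero_iff.1 this)

theorem volt_exists [CompleteSpace E] [CompleteSpace F]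
    {P : ℝ × ℝ × ℝ → E × F → E} {Q : ℝ × ℝ × ℝ → E × F → F}
    {D : ℝ × ℝ × ℝ → E × F} (hP : Continuous (Function.uncurry P))
    (hQ : Continuous (Function.uncurry Q)) (hD : Continuous D)
    (hPL : LipOnCubes P) (hQL : LipOnCubes Q) :
    ∃ f : ℝ × ℝ × ℝ → E × F, Continuous f ∧ volt P Q D f = f := by
  let a : ℕ → ℝ × ℝ × ℝ → E × F := fun k => (volt P Q D)^[k] 0
  have ha : ∀ k, Continuous (a k) := by
    intro k
    induction k with
    | zero => exact continuous_const
    | succ k ih =>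
      simp only [a, Function.iterate_succ_apply']
      exact continuous_volt hP hQ hD ih
  have hsucc : ∀ k, a (k + 1) = volt P Q D (a k) := fun k => by
    simp only [a, Function.iterate_succ_apply']
  -- geometric decay of the increments in the weighted norm, on every cube
  have key : ∀ r : ℝ, ∃ C L : ℝ, 0 ≤ C ∧ 0 ≤ L ∧
      (∀ p ∈ cube r, ∀ x y, ‖P p x - P p y‖ ≤ L * ‖x - y‖) ∧
      (∀ p ∈ cube r, ∀ x y, ‖Q p x - Q p y‖ ≤ L * ‖x - y‖) ∧
      ∀ p ∈ cube r, ∀ k : ℕ, dist (a k p) (a (k + 1) p)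
        ≤ C * Real.exp ((2 * L + 1) * |p.2.1 + p.2.2|) * (1 / 2) ^ k := by
    intro r
    obtain ⟨L, hL, h1, h2⟩ := hPL.common hQL r
    obtain ⟨C, hC⟩ := (isCompact_cube r).exists_bound_of_continuousOn
      ((ha 0).sub (ha 1)).continuousOn
    refine ⟨max C 0, L, le_max_right _ _, hL, h1, h2, ?_⟩
    have : ∀ k : ℕ, ∀ p ∈ cube r, ‖a k p - a (k + 1) p‖
        ≤ max C 0 * (1 / 2) ^ k * Real.exp ((2 * L + 1) * |p.2.1 + p.2.2|) := by
      intro k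
      induction k with
      | zero =>
        intro p hp
        simp only [pow_zero, mul_one]
        calc _ ≤ C := hC p hp
          _ ≤ max C 0 := le_max_left _ _
          _ ≤ _ := le_mul_of_one_le_right (le_max_right _ _) (Real.one_le_exp (by positivity))
      | succ k ih =>
        intro p hp
        have := volt_contract (D := D) hP hQ hL (by positivity : 0 < 2 * L + 1) (by linarith)
          h1 h2 (ha k) (ha (k + 1)) (by positivity) ih p hp
        rw [← hsucc, ← hsucc] at this
        convert this using 1
        ring
    intro p hp k
    rw [dist_eq_norm]
    convert this k p hp using 1
    ring
  have hlim : ∀ p, ∃ y, Filter.Tendsto (fun k => a k p) Filter.atTop (nhds y) := by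
    intro p
    obtain ⟨r, hr⟩ := cube_mem_nhds p
    obtain ⟨C, L, -, -, -, -, h⟩ := key r
    exact cauchySeq_tendsto_of_complete
      (cauchySeq_of_le_geometric _ _ (by norm_num) (h p (mem_of_mem_nhds hr)))
  choose f hf using hlim
  have hdist : ∀ r : ℝ, ∃ C L : ℝ, 0 ≤ C ∧ 0 ≤ L ∧
      (∀ p ∈ cube r, ∀ x y, ‖P p x - P p y‖ ≤ L * ‖x - y‖) ∧
      (∀ p ∈ cube r, ∀ x y, ‖Q p x - Q p y‖ ≤ L * ‖x - y‖) ∧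
      ∀ k : ℕ, ∀ p ∈ cube r, ‖a k p - f p‖
        ≤ C * (1 / 2) ^ k * Real.exp ((2 * L + 1) * |p.2.1 + p.2.2|) := by
    intro r
    obtain ⟨C, L, hC, hL, h1, h2, h⟩ := key r
    refine ⟨2 * C, L, by positivity, hL, h1, h2, ?_⟩
    intro k p hp
    have := dist_le_of_le_geometric_of_tendsto _ _ (by norm_num) (h p hp) (hf p) k
    rw [dist_eq_norm] at this
    convert this using 1
    ring
  have hfc : Continuous f := by
    have : TendstoLocallyUniformly a f Filter.atTop := by
      rw [Metric.tendstoLocallyUniformly_iff]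
      intro ε hε p
      obtain ⟨r, hr⟩ := cube_mem_nhds p
      obtain ⟨C, L, hC, hL, -, -, h⟩ := hdist r
      obtain ⟨B, hB⟩ := (isCompact_cube r).exists_bound_of_continuousOn
        (f := fun p : ℝ × ℝ × ℝ => Real.exp ((2 * L + 1) * |p.2.1 + p.2.2|))
        (Continuous.continuousOn (by fun_prop))
      have hlim : Filter.Tendsto (fun k : ℕ => C * (1 / 2 : ℝ) ^ k * B) Filter.atTop (nhds 0) := by
        have := ((tendsto_pow_atTop_nhds_zero_of_lt_one (r := (1 / 2 : ℝ)) (by norm_num)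
          (by norm_num)).const_mul C).mul_const B
        simpa using this
      refine ⟨cube r, hr, ?_⟩
      filter_upwards [hlim.eventually_lt_const hε] with k hk y hy
      rw [dist_comm, dist_eq_norm]
      refine (h k y hy).trans_lt (lt_of_le_of_lt ?_ hk)
      gcongr
      exact (Real.le_norm_self _).trans (hB y hy)
    exact this.continuous (Filter.Frequently.of_forall ha)
  refine ⟨f, hfc, ?_⟩
  funext p
  obtain ⟨r, hr⟩ := cube_mem_nhds p
  have hp := mem_of_mem_nhds hr
  obtain ⟨C, L, hC, hL, h1, h2, h⟩ := hdist r
  have hlim2 : Filter.Tendsto (fun k : ℕ => C * (1 / 2 : ℝ) ^ k / 2 *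
      Real.exp ((2 * L + 1) * |p.2.1 + p.2.2|)) Filter.atTop (nhds 0) := by
    have := (((tendsto_pow_atTop_nhds_zero_of_lt_one (r := (1 / 2 : ℝ)) (by norm_num)
      (by norm_num)).const_mul C).div_const 2).mul_const
        (Real.exp ((2 * L + 1) * |p.2.1 + p.2.2|))
    simpa using this
  have hT : Filter.Tendsto (fun k => a (k + 1) p) Filter.atTop (nhds (volt P Q D f p)) := by
    rw [tendsto_iff_norm_sub_tendsto_zero]
    refine squeeze_zero (fun _ => norm_nonneg _) (fun k => ?_) hlim2
    rw [hsucc]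
    exact volt_contract (D := D) hP hQ hL (by positivity : 0 < 2 * L + 1) (by linarith)
          h1 h2 (ha k) hfc (by positivity) (h k) p hp
  exact tendsto_nhds_unique hT ((Filter.tendsto_add_atTop_iff_nat 1).2 (hf p))

end Volterra

/-! ### Regularity and uniqueness for characteristic systems -/

section CharSystem

/-- The averaged derivative `∫₀¹ DP(x + s (y - x)) ds`, for which
`P y - P x = avgDeriv P x y (y - x)`. -/
def avgDeriv {G H : Type} [NormedAddCommGroup G] [NormedSpace ℝ G] [NormedAddCommGroup H]
    [NormedSpace ℝ H] (P : G → H) (x y : G) : G →L[ℝ] H :=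
  ∫ s in (0 : ℝ)..1, fderiv ℝ P (x + s • (y - x))

variable {G H E F : Type} [NormedAddCommGroup G] [NormedSpace ℝ G] [NormedAddCommGroup H]
  [NormedSpace ℝ H] [NormedAddCommGroup E] [NormedSpace ℝ E] [NormedAddCommGroup F]
  [NormedSpace ℝ F]

lemma avgDeriv_self [CompleteSpace H] (P : G → H) (x : G) : avgDeriv P x x = fderiv ℝ P x := by
  simp [avgDeriv]

lemma continuous_avgDeriv {P : G → H} (hP : ContDiff ℝ 1 P) :
    Continuous fun z : G × G => avgDeriv P z.1 z.2 := by
  unfold avgDeriv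
  apply intervalIntegral.continuous_parametric_intervalIntegral_of_continuous'
  have := hP.continuous_fderiv one_ne_zero
  exact this.comp (by fun_prop)

lemma avgDeriv_apply [CompleteSpace H] {P : G → H} (hP : ContDiff ℝ 1 P) (x y : G) :
    avgDeriv P x y (y - x) = P y - P x := by
  have hc : Continuous fun s : ℝ => fderiv ℝ P (x + s • (y - x)) :=
    (hP.continuous_fderiv one_ne_zero).comp (by fun_prop)
  unfold avgDeriv
  rw [ContinuousLinearMap.intervalIntegral_apply (hc.intervalIntegrable _ _)]
  rw [intervalIntegral.integral_eq_sub_of_hasDerivAt (f := fun s : ℝ => P (x + s • (y - x)))]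
  · simp
  · intro s _
    have h1 : HasDerivAt (fun s : ℝ => x + s • (y - x)) (y - x) s := by
      simpa using ((hasDerivAt_id s).smul_const (y - x)).const_add x
    exact ((hP.differentiable one_ne_zero _).hasFDerivAt).comp_hasDerivAt s h1
  · exact (hc.clm_apply continuous_const).intervalIntegrable _ _

lemma smul_integral_deriv [CompleteSpace E] {f f' : ℝ → E} (hf : ∀ s, HasDerivAt f (f' s) s)
    (hf' : Continuous f') (a b : ℝ) :
    (b - a) • ∫ s in (0 : ℝ)..1, f' (a + s * (b - a)) = f b - f a := by
  rw [← intervalIntegral.integral_smul]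
  rw [intervalIntegral.integral_eq_sub_of_hasDerivAt (f := fun s : ℝ => f (a + s * (b - a)))]
  · simp
  · intro s _
    have h1 : HasDerivAt (fun s : ℝ => a + s * (b - a)) (b - a) s := by
      simpa using ((hasDerivAt_id s).mul_const (b - a)).const_add a
    exact (hf _).scomp s h1
  · exact Continuous.intervalIntegrable (by fun_prop) _ _

lemma hasDerivAt_sub_smul {c : ℝ → E} {u : ℝ} (hc : ContinuousAt c u) :
    HasDerivAt (fun h => (h - u) • c h) (c u) u := by
  rw [hasDerivAt_iff_tendsto_slope]
  refine (hc.tendsto.mono_left nhdsWithin_le_nhds).congr' ?_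
  filter_upwards [self_mem_nhdsWithin] with h hh
  have : h - u ≠ 0 := sub_ne_zero.2 hh
  simp [slope_def_module, smul_smul, inv_mul_cancel₀ this]

lemma lipOnCubes_affine {A : ℝ × ℝ × ℝ → G →L[ℝ] H} (hA : Continuous A)
    {P : ℝ × ℝ × ℝ → G → H} (hP : ∀ p x y, P p x - P p y = A p (x - y)) : LipOnCubes P := by
  intro r
  obtain ⟨C, hC⟩ := (isCompact_cube r).exists_bound_of_continuousOn hA.continuousOn
  refine ⟨C, fun p hp x y => ?_⟩
  rw [hP]
  exact (A p).le_of_opNorm_le (hC p hp) _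

/-- `C¹` dependence on the parameter `u` of the solutions of the ordinary differential equation
`Y_v = P(Y, Z)` with data at `v = -u`.  The difference quotients `W(h, u, v)` of `Y(·, v)` solve a
linear equation whose coefficients extend continuously to `h = u`. -/
theorem exists_deriv_param [CompleteSpace E] [CompleteSpace F] {P : E × F → E}
    (hP : ContDiff ℝ 1 P) {Y : ℝ × ℝ → E} {Z Zu : ℝ × ℝ → F} (hYc : Continuous Y)
    (hZc : Continuous Z) (hZuc : Continuous Zu)
    (hY : ∀ u v, HasDerivAt (fun s => Y (u, s)) (P (Y (u, v), Z (u, v))) v)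
    (hZ : ∀ u v, HasDerivAt (fun s => Z (s, v)) (Zu (u, v)) u)
    {Y₀ : ℝ → E} (hY₀ : ContDiff ℝ 1 Y₀) (hini : ∀ u, Y (u, -u) = Y₀ u) :
    ∃ Yu : ℝ × ℝ → E, Continuous Yu ∧
      (∀ u v, HasDerivAt (fun s => Y (s, v)) (Yu (u, v)) u) ∧
      (∀ u v, HasDerivAt (fun s => Yu (u, s))
        (fderiv ℝ P (Y (u, v), Z (u, v)) (Yu (u, v), Zu (u, v))) v) ∧
      ∀ u, Yu (u, -u) = deriv Y₀ u + P (Y (u, -u), Z (u, -u)) := by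
  have hPc := hP.continuous
  have hdY₀ : Continuous (deriv Y₀) := hY₀.continuous_deriv le_rfl
  set A : ℝ × ℝ × ℝ → (E × F) →L[ℝ] E := fun p =>
    avgDeriv P (Y (p.2.1, p.2.2), Z (p.2.1, p.2.2)) (Y (p.1, p.2.2), Z (p.1, p.2.2)) with hA
  have hAc : Continuous A := by
    refine (continuous_avgDeriv hP).comp (f := fun p : ℝ × ℝ × ℝ =>
      (((Y (p.2.1, p.2.2), Z (p.2.1, p.2.2)), (Y (p.1, p.2.2), Z (p.1, p.2.2))) :
        (E × F) × (E × F))) ?_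
    fun_prop
  set B : ℝ × ℝ × ℝ → F := fun p =>
    ∫ s in (0 : ℝ)..1, Zu (p.2.1 + s * (p.1 - p.2.1), p.2.2) with hB
  have hBc : Continuous B := by
    apply intervalIntegral.continuous_parametric_intervalIntegral_of_continuous'
    fun_prop
  have hBZ : ∀ p, (p.1 - p.2.1) • B p = Z (p.1, p.2.2) - Z (p.2.1, p.2.2) := fun p =>
    smul_integral_deriv (fun s => hZ s p.2.2) (by fun_prop) p.2.1 p.1
  set w : ℝ × ℝ × ℝ → E := fun p =>
    (∫ s in (0 : ℝ)..1, deriv Y₀ (p.2.1 + s * (p.1 - p.2.1))) +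
    ∫ s in (0 : ℝ)..1, P (Y (p.1, -p.1 + s * (-p.2.1 - -p.1)),
      Z (p.1, -p.1 + s * (-p.2.1 - -p.1))) with hw
  have hwc : Continuous w := by
    apply Continuous.add <;>
    · apply intervalIntegral.continuous_parametric_intervalIntegral_of_continuous'
      fun_prop
  have hwY : ∀ p, (p.1 - p.2.1) • w p = Y (p.1, -p.2.1) - Y (p.2.1, -p.2.1) := by
    intro p
    have h1 := smul_integral_deriv (fun s => (hY₀.differentiable one_ne_zero s).hasDerivAt)
      hdY₀ p.2.1 p.1
    have h2 := smul_integral_deriv (fun s => hY p.1 s) (by fun_prop) (-p.1) (-p.2.1)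
    have h3 : p.1 - p.2.1 = -p.2.1 - -p.1 := by ring
    rw [hw, smul_add, h1]
    nth_rewrite 1 [h3]
    rw [h2, hini, hini]
    abel
  -- the continuous solution of the linear equation for the difference quotients
  obtain ⟨f, hfc, hf⟩ := volt_exists
    (P := fun p (x : E × ℝ) => A p (x.1, B p)) (Q := fun _ (_ : E × ℝ) => (0 : ℝ))
    (D := fun p => (w p, 0)) (by unfold Function.uncurry; fun_prop)
    (by unfold Function.uncurry; fun_prop) (by fun_prop)
    (by
      apply lipOnCubes_affine (A := fun p => (A p).comp
        ((ContinuousLinearMap.inl ℝ E F).comp (ContinuousLinearMap.fst ℝ E ℝ)))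
      · exact hAc.clm_comp continuous_const
      · intro p x y
        rw [← map_sub]
        simp)
    (fun r => ⟨0, by simp⟩)
  set W : ℝ × ℝ × ℝ → E := fun p => (f p).1 with hW
  have hWc : Continuous W := by fun_prop
  have hWeq : ∀ p : ℝ × ℝ × ℝ, W p = w p + ∫ s in (-p.2.1)..p.2.2,
      A (p.1, p.2.1, s) (W (p.1, p.2.1, s), B (p.1, p.2.1, s)) := by
    intro p
    have := congrArg Prod.fst (congrFun hf p)
    exact this.symm
  have hkey : ∀ p : ℝ × ℝ × ℝ, Y (p.1, p.2.2) - Y (p.2.1, p.2.2) = (p.1 - p.2.1) • W p := by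
    have := volt_unique
      (P := fun p (x : E × ℝ) => A p (x.1, (p.1 - p.2.1) • B p))
      (Q := fun _ (_ : E × ℝ) => (0 : ℝ))
      (D := fun p => ((p.1 - p.2.1) • w p, 0)) (by unfold Function.uncurry; fun_prop)
      (by unfold Function.uncurry; fun_prop)
      (by
        apply lipOnCubes_affine (A := fun p => (A p).comp
          ((ContinuousLinearMap.inl ℝ E F).comp (ContinuousLinearMap.fst ℝ E ℝ)))
        · exact hAc.clm_comp continuous_const
        · intro p x y
          rw [← map_sub]
          simp)
      (fun r => ⟨0, by simp⟩)
      (f := fun p => (Y (p.1, p.2.2) - Y (p.2.1, p.2.2), 0))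
      (g := fun p => ((p.1 - p.2.1) • W p, 0)) (by fun_prop) (by fun_prop)
      (by
        funext p
        simp only [volt, intervalIntegral.integral_zero, add_zero, Prod.mk.injEq, and_true]
        have h1 : ∀ s, A (p.1, p.2.1, s) (Y (p.1, s) - Y (p.2.1, s),
            (p.1 - p.2.1) • B (p.1, p.2.1, s))
            = P (Y (p.1, s), Z (p.1, s)) - P (Y (p.2.1, s), Z (p.2.1, s)) := by
          intro s
          have := hBZ (p.1, p.2.1, s)
          dsimp only at this
          rw [this, ← avgDeriv_apply hP]
          rfl
        simp only [h1]
        rw [intervalIntegral.integral_eq_sub_of_hasDerivAt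
          (fun s _ => (hY p.1 s).sub (hY p.2.1 s))
          (Continuous.intervalIntegrable (by fun_prop) _ _), hwY]
        simp)
      (by
        funext p
        simp only [volt, intervalIntegral.integral_zero, add_zero, Prod.mk.injEq, and_true]
        have h1 : (p.1 - p.2.1) • W p = _ := congrArg ((p.1 - p.2.1) • ·) (hWeq p)
        rw [smul_add] at h1
        rw [h1]
        refine congrArg ((p.1 - p.2.1) • w p + ·) ?_
        rw [← intervalIntegral.integral_smul]
        apply intervalIntegral.integral_congr
        intro s _
        dsimp only
        rw [← map_smul, Prod.smul_mk])
    intro p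
    exact congrArg Prod.fst (congrFun this p)
  refine ⟨fun q => W (q.1, q.1, q.2), by fun_prop, ?_, ?_, ?_⟩
  · intro u v
    have h1 : (fun s => Y (s, v)) = fun s => Y (u, v) + (s - u) • W (s, u, v) := by
      funext s
      rw [← hkey (s, u, v)]
      simp
    rw [h1]
    exact (hasDerivAt_sub_smul (c := fun s => W (s, u, v))
      (Continuous.continuousAt (by fun_prop))).const_add _
  · intro u v
    have h1 : (fun s => W (u, u, s)) = fun s => w (u, u, 0) + ∫ s in (-u)..s,
        A (u, u, s) (W (u, u, s), B (u, u, s)) := by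
      funext s
      rw [hWeq]
    dsimp only
    rw [h1]
    have h2 := (Continuous.integral_hasStrictDerivAt (f := fun s =>
      A (u, u, s) (W (u, u, s), B (u, u, s))) (by fun_prop) (-u) v).hasDerivAt.const_add
        (w (u, u, 0))
    convert h2 using 1
    simp [hA, hB, avgDeriv_self]
  · intro u
    dsimp only
    rw [hWeq]
    simp [hw]

/-- `(Y, Z)` is a continuous solution of the characteristic system
`∂_v Y = P(Y, Z)`, `∂_u Z = Q(Y, Z)` on the plane with coordinates `(u, v)`. -/
structure IsCharSol (P : E × F → E) (Q : E × F → F) (Y : ℝ × ℝ → E) (Z : ℝ × ℝ → F) :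
    Prop where
  contY : Continuous Y
  contZ : Continuous Z
  derY : ∀ u v, HasDerivAt (fun s => Y (u, s)) (P (Y (u, v), Z (u, v))) v
  derZ : ∀ u v, HasDerivAt (fun s => Z (s, v)) (Q (Y (u, v), Z (u, v))) u

lemma hasFDerivAt_of_partials {Y Yu Yv : ℝ × ℝ → E} (hu : Continuous Yu) (hv : Continuous Yv)
    (h1 : ∀ u v, HasDerivAt (fun s => Y (s, v)) (Yu (u, v)) u)
    (h2 : ∀ u v, HasDerivAt (fun s => Y (u, s)) (Yv (u, v)) v) (p : ℝ × ℝ) :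
    HasFDerivAt Y ((ContinuousLinearMap.toSpanSingleton ℝ (Yu p)).coprod
      (ContinuousLinearMap.toSpanSingleton ℝ (Yv p))) p := by
  have hc : Continuous fun x : E => ContinuousLinearMap.toSpanSingleton ℝ x :=
    (ContinuousLinearMap.toSpanSingletonCLE (𝕜 := ℝ) (E := E)).continuous
  exact (hasStrictFDerivAt_uncurry_coprod (𝕜 := ℝ) (u := p) (f := fun a b => Y (a, b))
    (f₁ := fun a b => ContinuousLinearMap.toSpanSingleton ℝ (Yu (a, b)))
    (f₂ := fun a b => ContinuousLinearMap.toSpanSingleton ℝ (Yv (a, b)))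
    (Filter.Eventually.of_forall fun q => (h1 q.1 q.2).hasFDerivAt)
    (Filter.Eventually.of_forall fun q => (h2 q.1 q.2).hasFDerivAt)
    (hc.comp hu).continuousAt (hc.comp hv).continuousAt).hasFDerivAt

lemma contDiff_succ_of_partials {k : ℕ} {Y Yu Yv : ℝ × ℝ → E} (hu : ContDiff ℝ k Yu)
    (hv : ContDiff ℝ k Yv)
    (h1 : ∀ u v, HasDerivAt (fun s => Y (s, v)) (Yu (u, v)) u)
    (h2 : ∀ u v, HasDerivAt (fun s => Y (u, s)) (Yv (u, v)) v) :
    ContDiff ℝ (k + 1 : ℕ) Y := by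
  have hc : ContDiff ℝ k fun x : E => ContinuousLinearMap.toSpanSingleton ℝ x :=
    (ContinuousLinearMap.toSpanSingletonCLE (𝕜 := ℝ) (E := E)).contDiff
  push_cast
  rw [contDiff_succ_iff_hasFDerivAt]
  refine ⟨_, ?_, fun p => hasFDerivAt_of_partials hu.continuous hv.continuous h1 h2 p⟩
  have h3 := (ContinuousLinearMap.coprodEquivL (𝕜 := ℝ) (E := ℝ) (F := ℝ) (G := E) ℝ).contDiff.comp
    ((hc.comp hu).prodMk (hc.comp hv))
  exact h3

/-- Continuous solutions of a smooth characteristic system with smooth data are smooth: the first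
derivatives solve, together with the solution, a system of the same type. -/
theorem IsCharSol.contDiff_nat (k : ℕ) : ∀ {E F : Type} [NormedAddCommGroup E] [NormedSpace ℝ E]
    [CompleteSpace E] [NormedAddCommGroup F] [NormedSpace ℝ F] [CompleteSpace F]
    {P : E × F → E} {Q : E × F → F} {Y : ℝ × ℝ → E} {Z : ℝ × ℝ → F}
    (_ : ContDiff ℝ (⊤ : ℕ∞) P) (_ : ContDiff ℝ (⊤ : ℕ∞) Q) (_ : IsCharSol P Q Y Z)
    (_ : ContDiff ℝ (⊤ : ℕ∞) fun u => Y (u, -u)) (_ : ContDiff ℝ (⊤ : ℕ∞) fun v => Z (-v, v)),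
    ContDiff ℝ k Y ∧ ContDiff ℝ k Z := by
  induction k with
  | zero =>
    intro E F _ _ _ _ _ _ P Q Y Z hP hQ h hY₀ hZ₀
    simpa using ⟨h.contY, h.contZ⟩
  | succ k ih =>
    intro E F _ _ _ _ _ _ P Q Y Z hP hQ h hY₀ hZ₀
    have hYc := h.contY
    have hZc := h.contZ
    have hPc := hP.continuous
    have hQc := hQ.continuous
    have hswap : ContDiff ℝ (⊤ : ℕ∞) (Prod.swap : F × E → E × F) := by
      unfold Prod.swap; fun_prop
    obtain ⟨Yu, hYuc, hYu1, hYu2, hYu3⟩ := exists_deriv_param (hP.of_le (by simp)) hYc hZc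
      (Zu := fun q => Q (Y q, Z q)) (by fun_prop) h.derY h.derZ (hY₀.of_le (by simp))
      (fun _ => rfl)
    obtain ⟨Zv, hZvc, hZv1, hZv2, hZv3⟩ := exists_deriv_param (E := F) (F := E)
      (P := fun x => Q x.swap) ((hQ.comp hswap).of_le (by simp))
      (Y := fun q => Z q.swap) (Z := fun q => Y q.swap) (by fun_prop) (by fun_prop)
      (Zu := fun q => P (Y q.swap, Z q.swap)) (by fun_prop) (fun u v => h.derZ v u)
      (fun u v => h.derY v u) (hZ₀.of_le (by simp)) (fun _ => rfl)
    have hQd : Differentiable ℝ Q := hQ.differentiable (by simp)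
    have hQswap : ∀ (x : F × E) (a : F) (b : E),
        fderiv ℝ (fun x : F × E => Q x.swap) x (a, b) = fderiv ℝ Q x.swap (b, a) := by
      intro x a b
      have h1 : HasFDerivAt (Prod.swap : F × E → E × F)
          ((ContinuousLinearMap.snd ℝ F E).prod (ContinuousLinearMap.fst ℝ F E)) x :=
        ((ContinuousLinearMap.snd ℝ F E).prod (ContinuousLinearMap.fst ℝ F E)).hasFDerivAt
      have h2 := ((hQd x.swap).hasFDerivAt.comp x h1).fderiv
      have h3 := congrArg (fun T => T (a, b)) h2
      exact h3
    have hext := ih (E := E × E) (F := F × F)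
      (P := fun x => (P (x.1.1, x.2.1),
        fderiv ℝ P (x.1.1, x.2.1) (x.1.2, Q (x.1.1, x.2.1))))
      (Q := fun x => (Q (x.1.1, x.2.1),
        fderiv ℝ Q (x.1.1, x.2.1) (P (x.1.1, x.2.1), x.2.2)))
      (Y := fun q => (Y q, Yu q)) (Z := fun q => (Z q, Zv q.swap))
      (by
        have := hP.fderiv_right (m := (⊤ : ℕ∞)) (by simp)
        fun_prop)
      (by
        have := hQ.fderiv_right (m := (⊤ : ℕ∞)) (by simp)
        fun_prop)
      ⟨by fun_prop, by fun_prop, fun u v => (h.derY u v).prodMk (hYu2 u v), fun u v => by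
        have := hZv2 v u
        rw [hQswap] at this
        exact (h.derZ u v).prodMk this⟩
      (by
        have h4 : ContDiff ℝ (⊤ : ℕ∞) (deriv fun u => Y (u, -u)) :=
          ((contDiff_infty_iff_deriv).1 hY₀).2
        have h5 : ContDiff ℝ (⊤ : ℕ∞) fun u => Z (u, -u) := by
          simpa [Function.comp_def] using hZ₀.comp contDiff_neg
        simp only [hYu3]
        exact hY₀.prodMk (h4.add (hP.comp (hY₀.prodMk h5))))
      (by
        have h4 : ContDiff ℝ (⊤ : ℕ∞) (deriv fun v => Z (-v, v)) :=
          ((contDiff_infty_iff_deriv).1 hZ₀).2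
        have h5 : ContDiff ℝ (⊤ : ℕ∞) fun v => Y (-v, v) := by
          simpa [Function.comp_def] using hY₀.comp contDiff_neg
        simp only [Prod.swap_prod_mk, hZv3]
        exact hZ₀.prodMk (h4.add (hQ.comp (h5.prodMk hZ₀))))
    obtain ⟨h6, h7⟩ := hext
    have hYk : ContDiff ℝ k Y := h6.fst
    have hYuk : ContDiff ℝ k Yu := h6.snd
    have hZk : ContDiff ℝ k Z := h7.fst
    have hZvk : ContDiff ℝ k fun q : ℝ × ℝ => Zv q.swap := h7.snd
    have hPk : ContDiff ℝ k P := hP.of_le (by exact_mod_cast le_top)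
    have hQk : ContDiff ℝ k Q := hQ.of_le (by exact_mod_cast le_top)
    exact ⟨contDiff_succ_of_partials hYuk (hPk.comp (hYk.prodMk hZk)) hYu1 h.derY,
      contDiff_succ_of_partials (hQk.comp (hYk.prodMk hZk)) hZvk h.derZ (fun u v => hZv1 v u)⟩

theorem IsCharSol.contDiff [CompleteSpace E] [CompleteSpace F]
    {P : E × F → E} {Q : E × F → F} {Y : ℝ × ℝ → E} {Z : ℝ × ℝ → F}
    (hP : ContDiff ℝ (⊤ : ℕ∞) P) (hQ : ContDiff ℝ (⊤ : ℕ∞) Q) (h : IsCharSol P Q Y Z)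
    (hY₀ : ContDiff ℝ (⊤ : ℕ∞) fun u => Y (u, -u))
    (hZ₀ : ContDiff ℝ (⊤ : ℕ∞) fun v => Z (-v, v)) :
    ContDiff ℝ (⊤ : ℕ∞) Y ∧ ContDiff ℝ (⊤ : ℕ∞) Z :=
  ⟨contDiff_infty.2 fun k => (IsCharSol.contDiff_nat k hP hQ h hY₀ hZ₀).1,
    contDiff_infty.2 fun k => (IsCharSol.contDiff_nat k hP hQ h hY₀ hZ₀).2⟩

theorem exists_isCharSol [CompleteSpace E] [CompleteSpace F]
    {P : E × F → E} {Q : E × F → F} {K K' : NNReal} (hP : LipschitzWith K P)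
    (hQ : LipschitzWith K' Q) {Y₀ : ℝ → E} {Z₀ : ℝ → F} (hY₀ : Continuous Y₀)
    (hZ₀ : Continuous Z₀) :
    ∃ Y Z, IsCharSol P Q Y Z ∧ (∀ u, Y (u, -u) = Y₀ u) ∧ ∀ v, Z (-v, v) = Z₀ v := by
  have hPc := hP.continuous
  have hQc := hQ.continuous
  obtain ⟨f, hfc, hf⟩ := volt_exists (P := fun _ x => P x) (Q := fun _ x => Q x)
    (D := fun p => (Y₀ p.2.1, Z₀ p.2.2)) (by unfold Function.uncurry; fun_prop)
    (by unfold Function.uncurry; fun_prop) (by fun_prop)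
    (fun r => ⟨K, fun _ _ x y => hP.norm_sub_le x y⟩)
    (fun r => ⟨K', fun _ _ x y => hQ.norm_sub_le x y⟩)
  have h1 : ∀ u v, (f (0, u, v)).1 = Y₀ u + ∫ s in (-u)..v, P (f (0, u, s)) := fun u v =>
    (congrArg Prod.fst (congrFun hf (0, u, v))).symm
  have h2 : ∀ u v, (f (0, u, v)).2 = Z₀ v + ∫ s in (-v)..u, Q (f (0, s, v)) := fun u v =>
    (congrArg Prod.snd (congrFun hf (0, u, v))).symm
  refine ⟨fun q => (f (0, q)).1, fun q => (f (0, q)).2, ⟨by fun_prop, by fun_prop, ?_, ?_⟩,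
    ?_, ?_⟩
  · intro u v
    simp only [h1 u]
    have := (Continuous.integral_hasStrictDerivAt (f := fun s => P (f (0, u, s)))
      (by fun_prop) (-u) v).hasDerivAt.const_add (Y₀ u)
    simpa [← h1] using this
  · intro u v
    simp only [h2 _ v]
    have := (Continuous.integral_hasStrictDerivAt (f := fun s => Q (f (0, s, v)))
      (by fun_prop) (-v) u).hasDerivAt.const_add (Z₀ v)
    simpa [← h2] using this
  · intro u
    simp [h1]
  · intro v
    simp [h2]

/-- Two solutions with the same data agree: their difference solves a linear system. -/
theorem IsCharSol.unique [CompleteSpace E] [CompleteSpace F]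
    {P : E × F → E} {Q : E × F → F} (hP : ContDiff ℝ 1 P) (hQ : ContDiff ℝ 1 Q)
    {Y Y' : ℝ × ℝ → E} {Z Z' : ℝ × ℝ → F} (h : IsCharSol P Q Y Z) (h' : IsCharSol P Q Y' Z')
    (hY : ∀ u, Y (u, -u) = Y' (u, -u)) (hZ : ∀ v, Z (-v, v) = Z' (-v, v)) : Y = Y' := by
  have hYc := h.contY
  have hZc := h.contZ
  have hYc' := h'.contY
  have hZc' := h'.contZ
  have hPc := hP.continuous
  have hQc := hQ.continuous
  set A : ℝ × ℝ × ℝ → (E × F) →L[ℝ] E := fun p => avgDeriv P (Y' p.2, Z' p.2) (Y p.2, Z p.2)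
  set B : ℝ × ℝ × ℝ → (E × F) →L[ℝ] F := fun p => avgDeriv Q (Y' p.2, Z' p.2) (Y p.2, Z p.2)
  have hc : Continuous fun p : ℝ × ℝ × ℝ =>
      (((Y' p.2, Z' p.2), (Y p.2, Z p.2)) : (E × F) × (E × F)) := by fun_prop
  have hAc : Continuous A := (continuous_avgDeriv hP).comp hc
  have hBc : Continuous B := (continuous_avgDeriv hQ).comp hc
  have hA : ∀ p : ℝ × ℝ × ℝ, A p (Y p.2 - Y' p.2, Z p.2 - Z' p.2)
      = P (Y p.2, Z p.2) - P (Y' p.2, Z' p.2) := fun p => by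
    rw [← avgDeriv_apply hP]; rfl
  have hB : ∀ p : ℝ × ℝ × ℝ, B p (Y p.2 - Y' p.2, Z p.2 - Z' p.2)
      = Q (Y p.2, Z p.2) - Q (Y' p.2, Z' p.2) := fun p => by
    rw [← avgDeriv_apply hQ]; rfl
  have := volt_unique (P := fun p x => A p x) (Q := fun p x => B p x) (D := 0)
    (f := fun p => (Y p.2 - Y' p.2, Z p.2 - Z' p.2)) (g := 0)
    (by unfold Function.uncurry; fun_prop) (by unfold Function.uncurry; fun_prop)
    (lipOnCubes_affine hAc fun p x y => (map_sub _ _ _).symm)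
    (lipOnCubes_affine hBc fun p x y => (map_sub _ _ _).symm)
    (by fun_prop) continuous_const
    (by
      funext p
      simp only [volt, hA, hB]
      rw [intervalIntegral.integral_eq_sub_of_hasDerivAt
          (fun s _ => (h.derY p.2.1 s).sub (h'.derY p.2.1 s))
          (Continuous.intervalIntegrable (by fun_prop) _ _),
        intervalIntegral.integral_eq_sub_of_hasDerivAt
          (fun s _ => (h.derZ s p.2.2).sub (h'.derZ s p.2.2))
          (Continuous.intervalIntegrable (by fun_prop) _ _)]
      simp [hY, hZ])
    (by funext p; simp [volt])
  funext q
  exact sub_eq_zero.1 (congrArg Prod.fst (congrFun this (0, q)))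

end CharSystem

/-! ### Bounded Lipschitz coefficients -/

/-- Bounded, globally Lipschitz real functions. -/
def IsBddLip {X : Type*} [PseudoMetricSpace X] (f : X → ℝ) : Prop :=
  (∃ C : ℝ, ∀ x, |f x| ≤ C) ∧ ∃ K : NNReal, LipschitzWith K f

namespace IsBddLip

variable {X Y : Type*} [PseudoMetricSpace X] [PseudoMetricSpace Y] {f g : X → ℝ}

lemma const (c : ℝ) : IsBddLip fun _ : X => c :=
  ⟨⟨|c|, fun _ => le_rfl⟩, 0, LipschitzWith.const c⟩

lemma add (hf : IsBddLip f) (hg : IsBddLip g) : IsBddLip fun x => f x + g x := by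
  obtain ⟨⟨C, hC⟩, K, hK⟩ := hf
  obtain ⟨⟨C', hC'⟩, K', hK'⟩ := hg
  exact ⟨⟨C + C', fun x => (abs_add_le _ _).trans (add_le_add (hC x) (hC' x))⟩, _, hK.add hK'⟩

lemma mul (hf : IsBddLip f) (hg : IsBddLip g) : IsBddLip fun x => f x * g x := by
  obtain ⟨⟨C, hC⟩, K, hK⟩ := hf
  obtain ⟨⟨C', hC'⟩, K', hK'⟩ := hg
  refine ⟨⟨|C| * |C'|, fun x => ?_⟩, ⟨|C| * K' + |C'| * K, by positivity⟩, ?_⟩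
  · rw [abs_mul]
    exact mul_le_mul ((hC x).trans (le_abs_self _)) ((hC' x).trans (le_abs_self _))
      (abs_nonneg _) (abs_nonneg _)
  · refine LipschitzWith.of_dist_le_mul fun x y => ?_
    have h1 := hK.dist_le_mul x y
    have h2 := hK'.dist_le_mul x y
    rw [Real.dist_eq] at h1 h2 ⊢
    have e : f x * g x - f y * g y = f x * (g x - g y) + g y * (f x - f y) := by ring
    rw [e]
    refine (abs_add_le _ _).trans ?_
    rw [abs_mul, abs_mul]
    have h3 : |f x| * |g x - g y| ≤ |C| * (K' * dist x y) :=
      mul_le_mul ((hC x).trans (le_abs_self _)) h2 (abs_nonneg _) (abs_nonneg _)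
    have h4 : |g y| * |f x - f y| ≤ |C'| * (K * dist x y) :=
      mul_le_mul ((hC' y).trans (le_abs_self _)) h1 (abs_nonneg _) (abs_nonneg _)
    change _ ≤ (|C| * K' + |C'| * K) * dist x y
    linarith

lemma neg (hf : IsBddLip f) : IsBddLip fun x => -f x := by
  simpa using (const (X := X) (-1)).mul hf

lemma sub (hf : IsBddLip f) (hg : IsBddLip g) : IsBddLip fun x => f x - g x := by
  simpa [sub_eq_add_neg] using hf.add hg.neg

lemma sum {ι : Type*} (s : Finset ι) {f : ι → X → ℝ} (h : ∀ i, IsBddLip (f i)) :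
    IsBddLip fun x => ∑ i ∈ s, f i x := by
  classical
  induction s using Finset.induction_on with
  | empty => simpa using const (X := X) 0
  | insert a s ha ih => simpa [Finset.sum_insert ha] using (h a).add ih

lemma comp (hf : IsBddLip f) {k : Y → X} {K : NNReal} (hk : LipschitzWith K k) :
    IsBddLip fun y => f (k y) := by
  obtain ⟨⟨C, hC⟩, K', hK'⟩ := hf
  exact ⟨⟨C, fun x => hC _⟩, _, hK'.comp hk⟩

end IsBddLip

/-- A function all of whose iterated derivatives are bounded. -/
def HasBddDerivs {V W : Type*} [NormedAddCommGroup V] [NormedSpace ℝ V] [NormedAddCommGroup W]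
    [NormedSpace ℝ W] (f : V → W) : Prop :=
  ContDiff ℝ (⊤ : ℕ∞) f ∧ ∀ k : ℕ, ∃ C : ℝ, ∀ q, ‖iteratedFDeriv ℝ k f q‖ ≤ C

namespace HasBddDerivs

variable {V W W' : Type*} [NormedAddCommGroup V] [NormedSpace ℝ V] [NormedAddCommGroup W]
    [NormedSpace ℝ W] [NormedAddCommGroup W'] [NormedSpace ℝ W']

lemma clm {f : V → W} (hf : HasBddDerivs f) (L : W →L[ℝ] W') : HasBddDerivs fun q => L (f q) := by
  refine ⟨L.contDiff.comp hf.1, fun k => ?_⟩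
  obtain ⟨C, hC⟩ := hf.2 k
  refine ⟨‖L‖ * C, fun q => ?_⟩
  exact (L.norm_iteratedFDeriv_comp_left (hf.1.contDiffAt (x := q))
    (by exact_mod_cast le_top)).trans (by gcongr; exact hC q)

lemma fderiv {f : V → W} (hf : HasBddDerivs f) : HasBddDerivs (fderiv ℝ f) := by
  refine ⟨hf.1.fderiv_right (by norm_cast), fun k => ?_⟩
  obtain ⟨C, hC⟩ := hf.2 (k + 1)
  exact ⟨C, fun q => by rw [norm_iteratedFDeriv_fderiv]; exact hC q⟩

lemma isBddLip {f : V → ℝ} (hf : HasBddDerivs f) : IsBddLip f := by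
  obtain ⟨C₀, h0⟩ := hf.2 0
  obtain ⟨C₁, h1⟩ := hf.2 1
  refine ⟨⟨C₀, fun q => by simpa using h0 q⟩, C₁.toNNReal, ?_⟩
  refine lipschitzWith_of_nnnorm_fderiv_le (𝕜 := ℝ) (hf.1.differentiable (by simp)) fun q => ?_
  have := h1 q
  rw [norm_iteratedFDeriv_one] at this
  rw [← NNReal.coe_le_coe, coe_nnnorm]
  exact this.trans (Real.le_coe_toNNReal _)

end HasBddDerivs

variable {n : ℕ}

/-- The `(i, j)` entry as a continuous functional for the `ℓ∞` operator norm on matrices. -/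
def entryCLM (i j : Fin n) : Matrix (Fin n) (Fin n) ℝ →L[ℝ] ℝ :=
  LinearMap.mkContinuous (Matrix.entryLinearMap ℝ ℝ i j) 1 fun M => by
    rw [one_mul, Matrix.linfty_opNorm_def]
    have h1 : ‖M i j‖₊ ≤ ∑ j, ‖M i j‖₊ :=
      Finset.single_le_sum (f := fun j => ‖M i j‖₊) (fun _ _ => zero_le) (Finset.mem_univ j)
    have h2 := h1.trans (Finset.le_sup (f := fun i => ∑ j, ‖M i j‖₊) (Finset.mem_univ i))
    exact_mod_cast h2

lemma HasBddDerivs.entry {M : (Fin n → ℝ) → Matrix (Fin n) (Fin n) ℝ} (hM : HasBddDerivs M)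
    (i j : Fin n) : HasBddDerivs fun q => M q i j := hM.clm (entryCLM i j)

lemma HasBddDerivs.pdV {f : (Fin n → ℝ) → ℝ} (hf : HasBddDerivs f) (B : Fin n) :
    HasBddDerivs (pdV B f) :=
  hf.fderiv.clm (ContinuousLinearMap.apply ℝ ℝ (Pi.single B 1))

/-- The coefficients of the equation `∂ᵤ∂ᵥ φ^A = coef^A_{BC}(φ) ∂ᵤφ^B ∂ᵥφ^C`, which is the
torsion wave map equation in null coordinates. -/
def coef (g ginv p : (Fin n → ℝ) → Matrix (Fin n) (Fin n) ℝ) (κ : ℝ) (A B C : Fin n)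
    (q : Fin n → ℝ) : ℝ :=
  κ * Tor ginv p A B C q - Gamma g ginv A B C q

/-- The quadratic nonlinearity of the equation in null coordinates. -/
def nonlin (g ginv p : (Fin n → ℝ) → Matrix (Fin n) (Fin n) ℝ) (κ : ℝ) (q a b : Fin n → ℝ) :
    Fin n → ℝ :=
  fun A => ∑ B, ∑ C, coef g ginv p κ A B C q * (a B * b C)

section
variable {g ginv p : (Fin n → ℝ) → Matrix (Fin n) (Fin n) ℝ} (hg : HasBddDerivs g)
  (hginv : HasBddDerivs ginv) (hp : HasBddDerivs p)
include hg hginv hp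

lemma isBddLip_coef (κ : ℝ) (A B C : Fin n) : IsBddLip (coef g ginv p κ A B C) := by
  unfold coef Tor Gamma
  refine IsBddLip.sub (.mul (.const _) (.mul (.const _) (.sum _ fun D => ?_)))
    (.mul (.const _) (.sum _ fun D => ?_))
  · exact .mul (hginv.entry A D).isBddLip (.add (.add ((hp.entry B C).pdV D).isBddLip
      ((hp.entry C D).pdV B).isBddLip) ((hp.entry D B).pdV C).isBddLip)
  · exact .mul (hginv.entry A D).isBddLip (.sub (.add ((hg.entry D C).pdV B).isBddLip
      ((hg.entry B D).pdV C).isBddLip) ((hg.entry B C).pdV D).isBddLip)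

lemma contDiff_coef (κ : ℝ) (A B C : Fin n) :
    ContDiff ℝ (⊤ : ℕ∞) (coef g ginv p κ A B C) := by
  unfold coef Tor Gamma
  refine .sub (contDiff_const.mul (contDiff_const.mul (.sum fun D _ => ?_)))
    (contDiff_const.mul (.sum fun D _ => ?_))
  · exact .mul (hginv.entry A D).1 (.add (.add ((hp.entry B C).pdV D).1
      ((hp.entry C D).pdV B).1) ((hp.entry D B).pdV C).1)
  · exact .mul (hginv.entry A D).1 (.sub (.add ((hg.entry D C).pdV B).1
      ((hg.entry B D).pdV C).1) ((hg.entry B C).pdV D).1)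

lemma contDiff_nonlin (κ : ℝ) {X : Type*} [NormedAddCommGroup X] [NormedSpace ℝ X]
    {q a b : X → Fin n → ℝ} (hq : ContDiff ℝ (⊤ : ℕ∞) q) (ha : ContDiff ℝ (⊤ : ℕ∞) a)
    (hb : ContDiff ℝ (⊤ : ℕ∞) b) :
    ContDiff ℝ (⊤ : ℕ∞) fun x => nonlin g ginv p κ (q x) (a x) (b x) := by
  unfold nonlin
  refine contDiff_pi.2 fun A => .sum fun B _ => .sum fun C _ => ?_
  exact ((contDiff_coef hg hginv hp κ A B C).comp hq).mul
    ((contDiff_pi.1 ha B).mul (contDiff_pi.1 hb C))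

/-- With bounded Lipschitz truncations of the two gradient arguments, the nonlinearity becomes
bounded and globally Lipschitz. -/
lemma nonlin_trunc {η : (Fin n → ℝ) → Fin n → ℝ} (hη : ∀ A, IsBddLip fun a => η a A) (κ : ℝ) :
    (∃ M : ℝ, ∀ q a b, ‖nonlin g ginv p κ q (η a) (η b)‖ ≤ M) ∧
    ∃ K : NNReal, LipschitzWith K fun z : (Fin n → ℝ) × (Fin n → ℝ) × (Fin n → ℝ) =>
      nonlin g ginv p κ z.1 (η z.2.1) (η z.2.2) := by
  have H : ∀ A, IsBddLip fun z : (Fin n → ℝ) × (Fin n → ℝ) × (Fin n → ℝ) =>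
      nonlin g ginv p κ z.1 (η z.2.1) (η z.2.2) A := fun A => by
    unfold nonlin
    refine .sum _ fun B => .sum _ fun C => ?_
    refine ((isBddLip_coef hg hginv hp κ A B C).comp LipschitzWith.prod_fst).mul (.mul ?_ ?_)
    · exact (hη B).comp (LipschitzWith.prod_fst.comp LipschitzWith.prod_snd)
    · exact (hη C).comp (LipschitzWith.prod_snd.comp LipschitzWith.prod_snd)
  choose hb hl using H
  choose M hM using hb
  choose K hK using hl
  refine ⟨⟨∑ A, |M A|, fun q a b => ?_⟩, ∑ A, K A, ?_⟩
  · refine (pi_norm_le_iff_of_nonneg (Finset.sum_nonneg fun _ _ => abs_nonneg _)).2 fun A => ?_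
    exact ((hM A (q, a, b)).trans (le_abs_self _)).trans
      (Finset.single_le_sum (f := fun A => |M A|) (fun _ _ => abs_nonneg _) (Finset.mem_univ A))
  · refine LipschitzWith.of_dist_le_mul fun x y => ?_
    refine (dist_pi_le_iff (by positivity)).2 fun A => ((hK A).dist_le_mul x y).trans ?_
    gcongr
    exact Finset.single_le_sum (f := K) (fun _ _ => zero_le) (Finset.mem_univ A)

end

/-- A smooth, bounded and Lipschitz truncation of `ℝⁿ` which is the identity on a given ball. -/
lemma exists_trunc (R : ℝ) : ∃ η : (Fin n → ℝ) → Fin n → ℝ, ContDiff ℝ (⊤ : ℕ∞) η ∧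
    (∀ A, IsBddLip fun a => η a A) ∧ ∀ a, ‖a‖ ≤ R → η a = a := by
  let χ : ContDiffBump (0 : Fin n → ℝ) := ⟨|R| + 1, |R| + 2, by positivity, by linarith⟩
  have hsm : ContDiff ℝ (⊤ : ℕ∞) fun a => χ a • a := χ.contDiff.smul contDiff_id
  have hcs : HasCompactSupport fun a => χ a • a := χ.hasCompactSupport.smul_right
  refine ⟨fun a => χ a • a, hsm, fun A => ?_, fun a ha => ?_⟩
  · have h1 : ContDiff ℝ (⊤ : ℕ∞) fun a : Fin n → ℝ => (χ a • a) A :=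
      (contDiff_apply ℝ ℝ A).comp hsm
    have h2 : HasCompactSupport fun a : Fin n → ℝ => (χ a • a) A :=
      hcs.comp_left (g := fun a : Fin n → ℝ => a A) rfl
    refine ⟨?_, h1.lipschitzWith_of_hasCompactSupport h2 (by simp)⟩
    obtain ⟨C, hC⟩ := h2.exists_bound_of_continuous h1.continuous
    exact ⟨C, hC⟩
  · have : χ a = 1 := χ.one_of_mem_closedBall (by
      rw [mem_closedBall_zero_iff]
      exact (ha.trans (le_abs_self R)).trans (by change |R| ≤ |R| + 1; linarith))
    simp [this]

/-! ### Pointwise conservation of the null energies -/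

section
open scoped Matrix
variable {n : ℕ} {g ginv p : (Fin n → ℝ) → Matrix (Fin n) (Fin n) ℝ}

lemma pdV_symm (hgsymm : ∀ q, (g q).IsSymm) (A B C : Fin n) (q : Fin n → ℝ) :
    pdV A (fun r => g r B C) q = pdV A (fun r => g r C B) q := by
  have : (fun r => g r B C) = fun r => g r C B := funext fun r => ((hgsymm r).apply B C).symm
  rw [this]

lemma pdV_skew (hpskew : ∀ q, (p q).transpose = -p q) (A B C : Fin n) (q : Fin n → ℝ) :
    pdV A (fun r => p r B C) q = -pdV A (fun r => p r C B) q := by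
  have : (fun r => p r B C) = fun r => -p r C B := funext fun r => by
    have := congrFun (congrFun (hpskew r) C) B
    simpa using this
  rw [this, pdV, pdV, fderiv_fun_neg]
  rfl

lemma Gamma_symm (hgsymm : ∀ q, (g q).IsSymm) (A B C : Fin n) (q : Fin n → ℝ) :
    Gamma g ginv A B C q = Gamma g ginv A C B q := by
  unfold Gamma
  congr 1
  refine Finset.sum_congr rfl fun D _ => ?_
  rw [pdV_symm hgsymm B D C, pdV_symm hgsymm C B D, pdV_symm hgsymm D B C]
  ring

lemma Tor_antisymm (hpskew : ∀ q, (p q).transpose = -p q) (A B C : Fin n) (q : Fin n → ℝ) :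
    Tor ginv p A B C q = -Tor ginv p A C B q := by
  unfold Tor
  rw [← mul_neg, ← Finset.sum_neg_distrib]
  congr 1
  refine Finset.sum_congr rfl fun D _ => ?_
  rw [pdV_skew hpskew D B C, pdV_skew hpskew B C D, pdV_skew hpskew C D B]
  ring

/-- Exchanging the two null directions reverses the sign of the torsion coupling. -/
lemma coef_swap (hgsymm : ∀ q, (g q).IsSymm) (hpskew : ∀ q, (p q).transpose = -p q) (κ : ℝ)
    (A B C : Fin n) (q : Fin n → ℝ) :
    coef g ginv p κ A B C q = coef g ginv p (-κ) A C B q := by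
  rw [coef, coef, Gamma_symm hgsymm, Tor_antisymm hpskew]
  ring

lemma nonlin_swap (hgsymm : ∀ q, (g q).IsSymm) (hpskew : ∀ q, (p q).transpose = -p q) (κ : ℝ)
    (q a b : Fin n → ℝ) : nonlin g ginv p κ q a b = nonlin g ginv p (-κ) q b a := by
  funext A
  unfold nonlin
  rw [Finset.sum_comm]
  refine Finset.sum_congr rfl fun C _ => Finset.sum_congr rfl fun B _ => ?_
  rw [coef_swap hgsymm hpskew κ A B C, mul_comm (a B)]

lemma lower_ginv (hinv : ∀ q, g q * ginv q = 1 ∧ ginv q * g q = 1) (q : Fin n → ℝ) (A : Fin n)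
    (X : Fin n → ℝ) : ∑ B, g q A B * ∑ D, ginv q B D * X D = X A := by
  have h : g q *ᵥ (ginv q *ᵥ X) = X := by rw [Matrix.mulVec_mulVec, (hinv q).1, Matrix.one_mulVec]
  exact congrFun h A

/-- The coefficients with the upper index lowered by the metric. -/
lemma lower_coef (hinv : ∀ q, g q * ginv q = 1 ∧ ginv q * g q = 1) (κ : ℝ) (A C D : Fin n)
    (q : Fin n → ℝ) : ∑ B, g q A B * coef g ginv p κ B C D q =
      κ * (1 / 2) * (pdV A (fun r => p r C D) q + pdV C (fun r => p r D A) q +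
        pdV D (fun r => p r A C) q) - (1 / 2) * (pdV C (fun r => g r A D) q +
        pdV D (fun r => g r C A) q - pdV A (fun r => g r C D) q) := by
  rw [← lower_ginv hinv q A fun A => pdV A (fun r => p r C D) q + pdV C (fun r => p r D A) q +
    pdV D (fun r => p r A C) q, ← lower_ginv hinv q A fun A => pdV C (fun r => g r A D) q +
        pdV D (fun r => g r C A) q - pdV A (fun r => g r C D) q, Finset.mul_sum, Finset.mul_sum,
    ← Finset.sum_sub_distrib]
  refine Finset.sum_congr rfl fun B _ => ?_
  rw [coef, Tor, Gamma]
  ring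

/-- Metric compatibility together with total antisymmetry of the torsion. -/
lemma lower_coef_symm (hgsymm : ∀ q, (g q).IsSymm)
    (hinv : ∀ q, g q * ginv q = 1 ∧ ginv q * g q = 1)
    (hpskew : ∀ q, (p q).transpose = -p q) (κ : ℝ) (A C D : Fin n) (q : Fin n → ℝ) :
    ∑ B, g q A B * coef g ginv p κ B C D q + ∑ B, g q C B * coef g ginv p κ B A D q =
      -pdV D (fun r => g r A C) q := by
  rw [lower_coef hinv, lower_coef hinv, pdV_symm hgsymm D C A, pdV_skew hpskew A D C,
    pdV_skew hpskew C D A, pdV_skew hpskew D C A]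
  ring

/-- The squared length of the vector `a` at the point `q`. -/
def energy (g : (Fin n → ℝ) → Matrix (Fin n) (Fin n) ℝ) (q a : Fin n → ℝ) : ℝ :=
  ∑ A, ∑ B, g q A B * (a A * a B)

lemma energy_identity (hgsymm : ∀ q, (g q).IsSymm)
    (hinv : ∀ q, g q * ginv q = 1 ∧ ginv q * g q = 1)
    (hpskew : ∀ q, (p q).transpose = -p q) (κ : ℝ) (q a b : Fin n → ℝ) :
    ∑ A, ∑ B, ((∑ D, b D * pdV D (fun r => g r A B) q) * (a A * a B) +
      g q A B * (nonlin g ginv p κ q a b A * a B + a A * nonlin g ginv p κ q a b B)) = 0 := by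
  set S : ℝ := ∑ A, ∑ C, ∑ D, (a A * a C * b D) * ∑ B, g q A B * coef g ginv p κ B C D q
    with hS
  have h1 : ∑ A, ∑ B, g q A B * (a A * nonlin g ginv p κ q a b B) = S := by
    refine Finset.sum_congr rfl fun A _ => ?_
    simp only [nonlin, Finset.mul_sum]
    rw [Finset.sum_comm]
    refine Finset.sum_congr rfl fun C _ => ?_
    rw [Finset.sum_comm]
    refine Finset.sum_congr rfl fun D _ => Finset.sum_congr rfl fun B _ => ?_
    ring
  have h2 : ∑ A, ∑ B, g q A B * (nonlin g ginv p κ q a b A * a B) = S := by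
    rw [← h1, Finset.sum_comm]
    refine Finset.sum_congr rfl fun B _ => Finset.sum_congr rfl fun A _ => ?_
    rw [(hgsymm q).apply B A]
    ring
  have h3 : S = ∑ A, ∑ C, ∑ D, (a A * a C * b D) * ∑ B, g q C B * coef g ginv p κ B A D q := by
    rw [hS, Finset.sum_comm]
    refine Finset.sum_congr rfl fun C _ => Finset.sum_congr rfl fun A _ =>
      Finset.sum_congr rfl fun D _ => ?_
    ring
  have h4 : S + S = -∑ A, ∑ B, (∑ D, b D * pdV D (fun r => g r A B) q) * (a A * a B) := by
    nth_rewrite 2 [h3]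
    rw [hS, ← Finset.sum_add_distrib, ← Finset.sum_neg_distrib]
    refine Finset.sum_congr rfl fun A _ => ?_
    rw [← Finset.sum_add_distrib, ← Finset.sum_neg_distrib]
    refine Finset.sum_congr rfl fun C _ => ?_
    rw [← Finset.sum_add_distrib, Finset.sum_mul, ← Finset.sum_neg_distrib]
    refine Finset.sum_congr rfl fun D _ => ?_
    rw [← mul_add, lower_coef_symm hgsymm hinv hpskew]
    ring
  simp only [mul_add, Finset.sum_add_distrib]
  rw [h1, h2]
  linarith

/-- Parallel transport along a curve with respect to a metric connection preserves length. -/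
lemma hasDerivAt_energy (hg : HasBddDerivs g) (hgsymm : ∀ q, (g q).IsSymm)
    (hinv : ∀ q, g q * ginv q = 1 ∧ ginv q * g q = 1)
    (hpskew : ∀ q, (p q).transpose = -p q) (κ : ℝ) {φ a : ℝ → Fin n → ℝ} {b : Fin n → ℝ} {s : ℝ}
    (hφ : HasDerivAt φ b s) (ha : HasDerivAt a (nonlin g ginv p κ (φ s) (a s) b) s) :
    HasDerivAt (fun s => energy g (φ s) (a s)) 0 s := by
  rw [← energy_identity hgsymm hinv hpskew κ (φ s) (a s) b]
  have ha' := hasDerivAt_pi.1 ha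
  refine HasDerivAt.fun_sum fun A _ => HasDerivAt.fun_sum fun B _ => ?_
  refine HasDerivAt.mul ?_ ((ha' A).mul (ha' B))
  have hd : DifferentiableAt ℝ (fun r => g r A B) (φ s) :=
    (hg.entry A B).1.differentiable (by simp) _
  refine (hd.hasFDerivAt.comp_hasDerivAt s hφ).congr_deriv ?_
  conv_lhs => rw [pi_eq_sum_univ' b]
  rw [map_sum]
  refine Finset.sum_congr rfl fun D _ => ?_
  rw [map_smul, smul_eq_mul, pdV]

/-- Uniform ellipticity: the energy controls the coordinates of the vector. -/
lemma sq_le_energy (hgpos : ∀ q, (g q).PosDef) (hgsymm : ∀ q, (g q).IsSymm)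
    (hinv : ∀ q, g q * ginv q = 1 ∧ ginv q * g q = 1) {C : ℝ} (hC : 0 < C)
    (hb : ∀ q A, ginv q A A ≤ C) (q a : Fin n → ℝ) (A : Fin n) :
    a A ^ 2 ≤ C * energy g q a := by
  have he : ∀ w : Fin n → ℝ, energy g q w = w ⬝ᵥ (g q *ᵥ w) := fun w => by
    simp only [energy, dotProduct, Matrix.mulVec, Finset.mul_sum]
    refine Finset.sum_congr rfl fun B _ => Finset.sum_congr rfl fun D _ => ?_
    ring
  have hpos : ∀ w : Fin n → ℝ, 0 ≤ w ⬝ᵥ (g q *ᵥ w) := fun w => by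
    simpa using (hgpos q).posSemidef.dotProduct_mulVec_nonneg w
  set w : Fin n → ℝ := ginv q *ᵥ Pi.single A 1 with hw
  have hgw : g q *ᵥ w = Pi.single A 1 := by
    rw [hw, Matrix.mulVec_mulVec, (hinv q).1, Matrix.one_mulVec]
  have hww : w ⬝ᵥ (g q *ᵥ w) = ginv q A A := by
    rw [hgw, dotProduct_single, hw]
    simp
  have haw : a ⬝ᵥ (g q *ᵥ w) = a A := by rw [hgw]; simp
  have hwa : w ⬝ᵥ (g q *ᵥ a) = a A := by
    rw [← haw, Matrix.dotProduct_mulVec, ← Matrix.mulVec_transpose, (hgsymm q).eq, dotProduct_comm]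
  have h := hpos (a - (a A / C) • w)
  have hexp : (a - (a A / C) • w) ⬝ᵥ (g q *ᵥ (a - (a A / C) • w)) =
      energy g q a - 2 * (a A / C) * a A + (a A / C) ^ 2 * ginv q A A := by
    rw [Matrix.mulVec_sub, Matrix.mulVec_smul, sub_dotProduct, dotProduct_sub, dotProduct_sub,
      smul_dotProduct, dotProduct_smul, smul_dotProduct, dotProduct_smul, haw, hwa, hww, he]
    simp only [smul_eq_mul]
    ring
  rw [hexp] at h
  have h2 : (a A / C) ^ 2 * ginv q A A ≤ (a A / C) ^ 2 * C :=
    mul_le_mul_of_nonneg_left (hb q A) (sq_nonneg _)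
  have h3 : 0 ≤ energy g q a - a A ^ 2 / C := by
    have : 2 * (a A / C) * a A - (a A / C) ^ 2 * C = a A ^ 2 / C := by field_simp; ring
    linarith
  have := (div_le_iff₀ hC).1 (sub_nonneg.1 h3)
  linarith
end

/-! ### Global existence in null coordinates -/

section
variable {V : Type*} [NormedAddCommGroup V] [NormedSpace ℝ V]

/-- Derivative of a directional derivative of `ψ` along a curve. -/
lemma hasDerivAt_fderiv_apply {ψ : ℝ × ℝ → V} (hψ : ContDiff ℝ 2 ψ) (w : ℝ × ℝ)
    {γ : ℝ → ℝ × ℝ} {γ' : ℝ × ℝ} {s : ℝ} (hγ : HasDerivAt γ γ' s) :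
    HasDerivAt (fun s => fderiv ℝ ψ (γ s) w) (fderiv ℝ (fderiv ℝ ψ) (γ s) γ' w) s := by
  have h1 : ContDiff ℝ 1 (fderiv ℝ ψ) := hψ.fderiv_right (by norm_num)
  have h2 := (h1.differentiable one_ne_zero (γ s)).hasFDerivAt.comp_hasDerivAt s hγ
  exact ((ContinuousLinearMap.apply ℝ V w).hasFDerivAt).comp_hasDerivAt s h2

lemma fderiv_fderiv_symm {ψ : ℝ × ℝ → V} (hψ : ContDiff ℝ 2 ψ) (z v w : ℝ × ℝ) :
    fderiv ℝ (fderiv ℝ ψ) z v w = fderiv ℝ (fderiv ℝ ψ) z w v :=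
  (hψ.contDiffAt (x := z)).isSymmSndFDerivAt (by simp) v w

lemma eq_of_hasDerivAt_zero {f : ℝ → V} {c T : ℝ}
    (h : ∀ s, |s - c| ≤ T → HasDerivAt f 0 s) {s : ℝ} (hs : |s - c| ≤ T) : f s = f c := by
  have hT : 0 ≤ T := (abs_nonneg _).trans hs
  have hx : s ∈ Set.Icc (c - T) (c + T) := by
    have := abs_le.1 hs
    constructor <;> linarith
  have hc : c ∈ Set.Icc (c - T) (c + T) := by constructor <;> linarith
  have := (convex_Icc (c - T) (c + T)).norm_image_sub_le_of_norm_hasDerivWithin_le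
    (f := f) (f' := fun _ => 0) (C := 0)
    (fun x hx => (h x (abs_le.2 ⟨by linarith [hx.1], by linarith [hx.2]⟩)).hasDerivWithinAt)
    (fun x _ => by simp) hc hx
  simpa [sub_eq_zero] using this

/-- Conservation of an energy on `[c - T, c + T]` gives the sharp bound `R - 1` there, and the
crude bound on the derivative gives `R` on the slightly larger interval. -/
lemma bootstrap_step {α ν : ℝ → V} {En : ℝ → ℝ} {c T ε e₀ R M : ℝ} (hT : 0 ≤ T)
    (hEn : ∀ s, |s - c| ≤ T → HasDerivAt En 0 s) (h0 : En c ≤ e₀)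
    (hco : ∀ s, En s ≤ e₀ → ‖α s‖ ≤ R - 1) (hα : ∀ s, HasDerivAt α (ν s) s)
    (hν : ∀ s, ‖ν s‖ ≤ M) (hM : M * ε ≤ 1) (hM0 : 0 ≤ M) (hε : 0 ≤ ε) {s : ℝ}
    (hs : |s - c| ≤ T + ε) :
    ‖α s‖ ≤ R := by
  obtain ⟨s', hs', hss'⟩ : ∃ s', |s' - c| ≤ T ∧ |s - s'| ≤ ε := by
    obtain ⟨h1, h2⟩ := abs_le.1 hs
    refine ⟨max (c - T) (min s (c + T)), abs_le.2 ⟨?_, ?_⟩, abs_le.2 ⟨?_, ?_⟩⟩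
    · linarith [le_max_left (c - T) (min s (c + T))]
    · have := max_le (show c - T ≤ c + T by linarith) (min_le_right s (c + T))
      linarith
    · have := max_le (show c - T ≤ s + ε by linarith)
        ((min_le_left s (c + T)).trans (show s ≤ s + ε by linarith))
      linarith
    · have := (le_min (show s - ε ≤ s by linarith) (show s - ε ≤ c + T by linarith)).trans
        (le_max_right (c - T) (min s (c + T)))
      linarith
  have h1 : ‖α s'‖ ≤ R - 1 := hco s' (by rw [eq_of_hasDerivAt_zero hEn hs']; exact h0)
  have h2 : ‖α s - α s'‖ ≤ M * ‖s - s'‖ :=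
    convex_univ.norm_image_sub_le_of_norm_hasDerivWithin_le
      (fun x _ => (hα x).hasDerivWithinAt) (fun x _ => hν x) (Set.mem_univ _) (Set.mem_univ _)
  have h3 : M * ‖s - s'‖ ≤ 1 := (mul_le_mul_of_nonneg_left hss' hM0).trans hM
  have h4 := norm_add_le (α s - α s') (α s')
  rw [sub_add_cancel] at h4
  linarith
end

section
variable {n : ℕ} {g ginv p : (Fin n → ℝ) → Matrix (Fin n) (Fin n) ℝ}

/-- The first-order system in null coordinates satisfied by `φ`, `a = ∂ᵤφ` and `b = ∂ᵥφ`. -/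
structure IsNullSol (g ginv p : (Fin n → ℝ) → Matrix (Fin n) (Fin n) ℝ) (κ : ℝ)
    (φ a b : ℝ × ℝ → Fin n → ℝ) : Prop where
  derU : ∀ u v, HasDerivAt (fun s => φ (s, v)) (a (u, v)) u
  derV : ∀ u v, HasDerivAt (fun s => φ (u, s)) (b (u, v)) v
  derA : ∀ u v, HasDerivAt (fun s => a (u, s))
    (nonlin g ginv p κ (φ (u, v)) (a (u, v)) (b (u, v))) v
  derB : ∀ u v, HasDerivAt (fun s => b (s, v))
    (nonlin g ginv p κ (φ (u, v)) (a (u, v)) (b (u, v))) u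

/-- If `∂ᵥφ = b` and `∂ᵥa = ∂ᵤb`, and the data are compatible, then `a = ∂ᵤφ`: the difference
`∂ᵤφ - a` is constant in `v` and vanishes on the initial line. -/
lemma hasDerivAt_u_of_system {φ a b N : ℝ × ℝ → Fin n → ℝ} (hφ : ContDiff ℝ 2 φ)
    (derV : ∀ u v, HasDerivAt (fun s => φ (u, s)) (b (u, v)) v)
    (derA : ∀ u v, HasDerivAt (fun s => a (u, s)) (N (u, v)) v)
    (derB : ∀ u v, HasDerivAt (fun s => b (s, v)) (N (u, v)) u)
    (hcomp : ∀ u, HasDerivAt (fun u => φ (u, -u)) (a (u, -u) - b (u, -u)) u) (u v : ℝ) :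
    HasDerivAt (fun s => φ (s, v)) (a (u, v)) u := by
  have hd : ∀ z, HasFDerivAt φ (fderiv ℝ φ z) z := fun z =>
    (hφ.differentiable two_ne_zero z).hasFDerivAt
  have lineV : ∀ u v : ℝ, HasDerivAt (fun s => (u, s)) ((0 : ℝ), (1 : ℝ)) v := fun u v =>
    (hasDerivAt_const v u).prodMk (hasDerivAt_id v)
  have lineU : ∀ u v : ℝ, HasDerivAt (fun s => (s, v)) ((1 : ℝ), (0 : ℝ)) u := fun u v =>
    (hasDerivAt_id u).prodMk (hasDerivAt_const u v)
  have hb : ∀ u v, fderiv ℝ φ (u, v) (0, 1) = b (u, v) := fun u v =>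
    ((hd (u, v)).comp_hasDerivAt v (lineV u v)).unique (derV u v)
  have hN : ∀ u v, fderiv ℝ (fderiv ℝ φ) (u, v) (1, 0) (0, 1) = N (u, v) := fun u v => by
    have h1 := hasDerivAt_fderiv_apply hφ (0, 1) (lineU u v)
    have h2 : (fun s => fderiv ℝ φ (s, v) (0, 1)) = fun s => b (s, v) :=
      funext fun s => hb s v
    rw [h2] at h1
    exact h1.unique (derB u v)
  have hw : ∀ s, HasDerivAt (fun s => fderiv ℝ φ (u, s) (1, 0) - a (u, s)) 0 s := fun s => by
    have h1 := (hasDerivAt_fderiv_apply hφ (1, 0) (lineV u s)).sub (derA u s)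
    rw [fderiv_fderiv_symm hφ, hN, sub_self] at h1
    exact h1
  have hconst := eq_of_hasDerivAt_zero (c := -u) (T := |v - -u|) (fun s _ => hw s) le_rfl
  have hzero : fderiv ℝ φ (u, -u) (1, 0) = a (u, -u) := by
    have h1 : HasDerivAt (fun u : ℝ => (u, -u)) ((1 : ℝ), (-1 : ℝ)) u :=
      (hasDerivAt_id u).prodMk (hasDerivAt_neg u)
    have h2 := ((hd (u, -u)).comp_hasDerivAt u h1).unique (hcomp u)
    have h3 : ((1 : ℝ), (-1 : ℝ)) = (1, 0) - (0, 1) := by simp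
    rw [h3, map_sub, hb] at h2
    exact sub_left_injective h2
  simp only [hzero, sub_self, sub_eq_zero] at hconst
  rw [← hconst]
  exact (hd (u, v)).comp_hasDerivAt u (lineU u v)

lemma norm_le_of_energy (hgpos : ∀ q, (g q).PosDef) (hgsymm : ∀ q, (g q).IsSymm)
    (hinv : ∀ q, g q * ginv q = 1 ∧ ginv q * g q = 1) {C : ℝ} (hC : 0 < C)
    (hb : ∀ q A, ginv q A A ≤ C) {q a : Fin n → ℝ} {e₀ : ℝ} (he : energy g q a ≤ e₀) :
    ‖a‖ ≤ Real.sqrt (C * e₀) := by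
  refine (pi_norm_le_iff_of_nonneg (Real.sqrt_nonneg _)).2 fun A => Real.abs_le_sqrt ?_
  exact (sq_le_energy hgpos hgsymm hinv hC hb q a A).trans (mul_le_mul_of_nonneg_left he hC.le)

lemma energy_le (hg : HasBddDerivs g) (A₀ : ℝ) :
    ∃ e₀, ∀ q a : Fin n → ℝ, ‖a‖ ≤ A₀ → energy g q a ≤ e₀ := by
  choose C hC using fun A B => (hg.entry A B).isBddLip.1
  refine ⟨∑ A, ∑ B, C A B * (A₀ * A₀), fun q a ha => ?_⟩
  refine Finset.sum_le_sum fun A _ => Finset.sum_le_sum fun B _ => ?_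
  have h1 : ∀ A, |a A| ≤ A₀ := fun A => (norm_le_pi_norm a A).trans ha
  have h0 : 0 ≤ A₀ := (norm_nonneg a).trans ha
  refine (le_abs_self _).trans ?_
  rw [abs_mul, abs_mul]
  exact mul_le_mul (hC A B q) (mul_le_mul (h1 A) (h1 B) (abs_nonneg _) h0) (by positivity)
    ((abs_nonneg _).trans (hC A B q))


/-- The nonlinearity truncated outside the ball of radius `R` in both gradient arguments. -/
lemma exists_trunc_nonlin (hg : HasBddDerivs g) (hginv : HasBddDerivs ginv) (hp : HasBddDerivs p)
    (κ R : ℝ) : ∃ η : (Fin n → ℝ) → Fin n → ℝ, (∀ a, ‖a‖ ≤ R → η a = a) ∧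
    ∃ N : ((Fin n → ℝ) × (Fin n → ℝ)) × (Fin n → ℝ) → Fin n → ℝ,
      (∀ z, N z = nonlin g ginv p κ z.1.1 (η z.1.2) (η z.2)) ∧ ContDiff ℝ (⊤ : ℕ∞) N ∧
      ∃ M : ℝ, 0 ≤ M ∧ (∀ z, ‖N z‖ ≤ M) ∧ ∃ K : NNReal, LipschitzWith K N := by
  obtain ⟨η, hηs, hηb, hη⟩ := exists_trunc (n := n) R
  obtain ⟨⟨M, hM⟩, K, hK⟩ := nonlin_trunc hg hginv hp hηb κ
  have hs : ContDiff ℝ (⊤ : ℕ∞) fun z : ((Fin n → ℝ) × (Fin n → ℝ)) × (Fin n → ℝ) =>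
      nonlin g ginv p κ z.1.1 (η z.1.2) (η z.2) :=
    contDiff_nonlin hg hginv hp κ (contDiff_fst.comp contDiff_fst)
      (hηs.comp (contDiff_snd.comp contDiff_fst)) (hηs.comp contDiff_snd)
  refine ⟨η, hη, fun z => nonlin g ginv p κ z.1.1 (η z.1.2) (η z.2), fun _ => rfl, hs, M,
    (norm_nonneg _).trans (hM 0 0 0), fun z => hM _ _ _, K, ?_⟩
  refine LipschitzWith.of_dist_le_mul fun x y => ?_
  refine (hK.dist_le_mul (x.1.1, x.1.2, x.2) (y.1.1, y.1.2, y.2)).trans_eq ?_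
  simp only [Prod.dist_eq, max_assoc]

/-- Global solvability of the null system: the solution of the truncated system stays where the
truncation is inactive. -/
theorem exists_isNullSol (hg : HasBddDerivs g) (hginv : HasBddDerivs ginv) (hp : HasBddDerivs p)
    (hgpos : ∀ q, (g q).PosDef) (hgsymm : ∀ q, (g q).IsSymm)
    (hinv : ∀ q, g q * ginv q = 1 ∧ ginv q * g q = 1) (hpskew : ∀ q, (p q).transpose = -p q)
    (κ : ℝ) {φ₀ a₀ b₀ : ℝ → Fin n → ℝ} (hφ₀ : ContDiff ℝ (⊤ : ℕ∞) φ₀)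
    (ha₀ : ContDiff ℝ (⊤ : ℕ∞) a₀) (hb₀ : ContDiff ℝ (⊤ : ℕ∞) b₀) {A₀ : ℝ}
    (ha₀b : ∀ u, ‖a₀ u‖ ≤ A₀) (hb₀b : ∀ v, ‖b₀ v‖ ≤ A₀)
    (hcomp : ∀ u, HasDerivAt φ₀ (a₀ u - b₀ (-u)) u) :
    ∃ φ a b : ℝ × ℝ → Fin n → ℝ, ContDiff ℝ (⊤ : ℕ∞) φ ∧ IsNullSol g ginv p κ φ a b ∧
      (∀ u, φ (u, -u) = φ₀ u) ∧ (∀ u, a (u, -u) = a₀ u) ∧ ∀ v, b (-v, v) = b₀ v := by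
  obtain ⟨e₀, he₀⟩ := energy_le hg A₀
  obtain ⟨C, hC, hCb⟩ : ∃ C : ℝ, 0 < C ∧ ∀ q A, ginv q A A ≤ C := by
    choose C hC using fun A => (hginv.entry A A).isBddLip.1
    refine ⟨1 + ∑ A, |C A|, by positivity, fun q A => ?_⟩
    have h1 := (le_abs_self _).trans ((hC A q).trans (le_abs_self _))
    have h2 := Finset.single_le_sum (f := fun A => |C A|) (fun _ _ => abs_nonneg _)
      (Finset.mem_univ A)
    linarith
  set R : ℝ := Real.sqrt (C * e₀) + 1 with hR
  have hco : ∀ {q a : Fin n → ℝ}, energy g q a ≤ e₀ → ‖a‖ ≤ R - 1 := fun he => by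
    rw [hR, add_sub_cancel_right]
    exact norm_le_of_energy hgpos hgsymm hinv hC hCb he
  obtain ⟨η, hη, N, hN, hNs, M, hM0, hM, K, hNl⟩ := exists_trunc_nonlin hg hginv hp κ R
  set P : ((Fin n → ℝ) × (Fin n → ℝ)) × (Fin n → ℝ) → (Fin n → ℝ) × (Fin n → ℝ) := fun z =>
    (z.2, N z) with hP
  have hPs : ContDiff ℝ (⊤ : ℕ∞) P := contDiff_snd.prodMk hNs
  have hPl : LipschitzWith _ P := LipschitzWith.prod_snd.prodMk hNl
  obtain ⟨Y, Z, hYZ, hY₀, hZ₀⟩ := exists_isCharSol hPl hNl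
    (hφ₀.prodMk ha₀).continuous hb₀.continuous
  have hYs := (hYZ.contDiff hPs hNs (by simpa only [hY₀] using hφ₀.prodMk ha₀)
    (by simpa only [hZ₀] using hb₀)).1
  have hφs : ContDiff ℝ (⊤ : ℕ∞) fun z => (Y z).1 := contDiff_fst.comp hYs
  have derV : ∀ u v, HasDerivAt (fun s => (Y (u, s)).1) (Z (u, v)) v := fun u v =>
    (hYZ.derY u v).fst
  have derA : ∀ u v, HasDerivAt (fun s => (Y (u, s)).2) (N (Y (u, v), Z (u, v))) v := fun u v =>
    (hYZ.derY u v).snd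
  have derB := hYZ.derZ
  have hZ₀' : ∀ u, Z (u, -u) = b₀ (-u) := fun u => by simpa using hZ₀ (-u)
  have derU : ∀ u v, HasDerivAt (fun s => (Y (s, v)).1) ((Y (u, v)).2) u := by
    refine hasDerivAt_u_of_system (φ := fun z => (Y z).1) (a := fun z => (Y z).2) (b := Z)
      (N := fun z => N (Y z, Z z)) (hφs.of_le (WithTop.coe_le_coe.2 le_top)) derV derA derB
      fun u => ?_
    simpa only [hY₀, hZ₀'] using hcomp u
  obtain ⟨ε, hε, hMε⟩ : ∃ ε : ℝ, 0 < ε ∧ M * ε ≤ 1 := by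
    refine ⟨1 / (M + 1), by positivity, ?_⟩
    rw [mul_one_div, div_le_one (by positivity)]
    linarith
  -- Strip by strip, the energies keep the gradient in the ball where the truncation is inactive.
  have key : ∀ k : ℕ, ∀ u v : ℝ, |u + v| ≤ k * ε → ‖(Y (u, v)).2‖ ≤ R ∧ ‖Z (u, v)‖ ≤ R := by
    intro k
    induction k with
    | zero =>
      intro u v huv
      obtain rfl : v = -u := by
        have : u + v = 0 := by simpa using huv
        linarith
      rw [hY₀, hZ₀']
      exact ⟨(hco (he₀ 0 _ (ha₀b u))).trans (by linarith),
        (hco (he₀ 0 _ (hb₀b (-u)))).trans (by linarith)⟩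
    | succ k ih =>
      have hNN : ∀ u v, |u + v| ≤ k * ε → N (Y (u, v), Z (u, v)) =
          nonlin g ginv p κ (Y (u, v)).1 (Y (u, v)).2 (Z (u, v)) := fun u v huv => by
        obtain ⟨h1, h2⟩ := ih u v huv
        rw [hN]
        simp only [hη _ h1, hη _ h2]
      have hk : (0 : ℝ) ≤ k * ε := by positivity
      intro u v huv
      push_cast at huv
      rw [add_mul, one_mul] at huv
      constructor
      · refine bootstrap_step (α := fun s => (Y (u, s)).2)
          (En := fun s => energy g (Y (u, s)).1 (Y (u, s)).2) (c := -u) hk (fun s hs => ?_) ?_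
          (fun s hs => hco hs) (derA u) (fun s => hM _) hMε hM0 hε.le
          (by rwa [sub_neg_eq_add, add_comm])
        · rw [sub_neg_eq_add, add_comm] at hs
          exact hasDerivAt_energy hg hgsymm hinv hpskew κ (derV u s)
            ((derA u s).congr_deriv (hNN u s hs))
        · simp only [hY₀]
          exact he₀ _ _ (ha₀b u)
      · refine bootstrap_step (α := fun s => Z (s, v))
          (En := fun s => energy g (Y (s, v)).1 (Z (s, v))) (c := -v) hk (fun s hs => ?_) ?_
          (fun s hs => hco hs) (fun s => derB s v) (fun s => hM _) hMε hM0 hε.le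
          (by rwa [sub_neg_eq_add])
        · rw [sub_neg_eq_add] at hs
          refine hasDerivAt_energy hg hgsymm hinv hpskew (-κ) (derU s v)
            ((derB s v).congr_deriv ?_)
          rw [hNN s v hs, nonlin_swap hgsymm hpskew]
        · simp only [hZ₀]
          exact he₀ _ _ (hb₀b v)
  have hNN : ∀ u v, N (Y (u, v), Z (u, v)) =
      nonlin g ginv p κ (Y (u, v)).1 (Y (u, v)).2 (Z (u, v)) := fun u v => by
    obtain ⟨k, hk⟩ := exists_nat_ge (|u + v| / ε)
    obtain ⟨h1, h2⟩ := key k u v ((div_le_iff₀ hε).1 hk)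
    rw [hN]
    simp only [hη _ h1, hη _ h2]
  exact ⟨fun z => (Y z).1, fun z => (Y z).2, Z, hφs,
    ⟨derU, derV, fun u v => (derA u v).congr_deriv (hNN u v),
      fun u v => (derB u v).congr_deriv (hNN u v)⟩,
    fun u => by simp only [hY₀], fun u => by simp only [hY₀], hZ₀⟩
end

/-! ### Passage between null and inertial coordinates -/

section
variable {n : ℕ} {g ginv p : (Fin n → ℝ) → Matrix (Fin n) (Fin n) ℝ}

/-- The point `(x, t)` with null coordinates `u = (t - t₀) + x` and `v = (t - t₀) - x`. -/
def ofNull (t₀ : ℝ) (z : ℝ × ℝ) : ℝ × ℝ := ((z.1 - z.2) / 2, t₀ + (z.1 + z.2) / 2)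

/-- The null coordinates `(u, v)` of the point `(x, t)`. -/
def toNull (t₀ : ℝ) (z : ℝ × ℝ) : ℝ × ℝ := (z.2 - t₀ + z.1, z.2 - t₀ - z.1)

lemma ofNull_toNull (t₀ : ℝ) (z : ℝ × ℝ) : ofNull t₀ (toNull t₀ z) = z := by
  ext <;> simp only [ofNull, toNull] <;> ring

lemma toNull_ofNull (t₀ : ℝ) (z : ℝ × ℝ) : toNull t₀ (ofNull t₀ z) = z := by
  ext <;> simp only [ofNull, toNull] <;> ring

lemma contDiff_toNull (t₀ : ℝ) {k : WithTop ℕ∞} : ContDiff ℝ k (toNull t₀) := by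
  unfold toNull
  fun_prop

lemma contDiff_ofNull (t₀ : ℝ) {k : WithTop ℕ∞} : ContDiff ℝ k (ofNull t₀) := by
  unfold ofNull
  fun_prop

lemma ofNull_diag (t₀ u : ℝ) : ofNull t₀ (u, -u) = (u, t₀) := by
  ext <;> simp only [ofNull] <;> ring

lemma hasDerivAt_ofNull_u (t₀ u v : ℝ) :
    HasDerivAt (fun s => ofNull t₀ (s, v)) ((1 / 2 : ℝ), (1 / 2 : ℝ)) u :=
  (((hasDerivAt_id u).sub_const v).div_const 2).prodMk
    ((((hasDerivAt_id u).add_const v).div_const 2).const_add t₀)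

lemma hasDerivAt_ofNull_v (t₀ u v : ℝ) :
    HasDerivAt (fun s => ofNull t₀ (u, s)) ((-1 / 2 : ℝ), (1 / 2 : ℝ)) v :=
  (((hasDerivAt_id v).const_sub u).div_const 2).prodMk
    ((((hasDerivAt_id v).const_add u).div_const 2).const_add t₀)

/-- `∂ᵤψ` as a function of the null coordinates. -/
def nullU (t₀ : ℝ) (ψ : ℝ × ℝ → Fin n → ℝ) (z : ℝ × ℝ) : Fin n → ℝ :=
  (1 / 2 : ℝ) • (pdt ψ (ofNull t₀ z) + pdx ψ (ofNull t₀ z))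

/-- `∂ᵥψ` as a function of the null coordinates. -/
def nullV (t₀ : ℝ) (ψ : ℝ × ℝ → Fin n → ℝ) (z : ℝ × ℝ) : Fin n → ℝ :=
  (1 / 2 : ℝ) • (pdt ψ (ofNull t₀ z) - pdx ψ (ofNull t₀ z))

lemma vec_u : ((1 / 2 : ℝ), (1 / 2 : ℝ)) = (1 / 2 : ℝ) • (((0 : ℝ), (1 : ℝ)) + (1, 0)) := by simp

lemma vec_v : ((-1 / 2 : ℝ), (1 / 2 : ℝ)) = (1 / 2 : ℝ) • (((0 : ℝ), (1 : ℝ)) - (1, 0)) := by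
  simp; norm_num

variable {ψ : ℝ × ℝ → Fin n → ℝ} (t₀ : ℝ)

lemma hasDerivAt_u (hψ : ContDiff ℝ 2 ψ) (u v : ℝ) :
    HasDerivAt (fun s => ψ (ofNull t₀ (s, v))) (nullU t₀ ψ (u, v)) u := by
  have h := (hψ.differentiable two_ne_zero (ofNull t₀ (u, v))).hasFDerivAt.comp_hasDerivAt u
    (hasDerivAt_ofNull_u t₀ u v)
  rw [vec_u, map_smul, map_add] at h
  exact h

lemma hasDerivAt_v (hψ : ContDiff ℝ 2 ψ) (u v : ℝ) :
    HasDerivAt (fun s => ψ (ofNull t₀ (u, s))) (nullV t₀ ψ (u, v)) v := by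
  have h := (hψ.differentiable two_ne_zero (ofNull t₀ (u, v))).hasFDerivAt.comp_hasDerivAt v
    (hasDerivAt_ofNull_v t₀ u v)
  rw [vec_v, map_smul, map_sub] at h
  exact h

/-- `¼ (∂ₜ² - ∂ₓ²) ψ`, which is `∂ᵤ∂ᵥψ` in null coordinates. -/
def wave (ψ : ℝ × ℝ → Fin n → ℝ) (z : ℝ × ℝ) : Fin n → ℝ :=
  (1 / 4 : ℝ) • (pdt (pdt ψ) z - pdx (pdx ψ) z)

lemma wave_eq (hψ : ContDiff ℝ 2 ψ) (z : ℝ × ℝ) : wave ψ z =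
    (1 / 4 : ℝ) • (fderiv ℝ (fderiv ℝ ψ) z (0, 1) (0, 1) -
      fderiv ℝ (fderiv ℝ ψ) z (1, 0) (1, 0)) := by
  have key : ∀ w : ℝ × ℝ, fderiv ℝ (fun y => fderiv ℝ ψ y w) z w =
      fderiv ℝ (fderiv ℝ ψ) z w w := fun w => by
    have h1 : ContDiff ℝ 1 (fderiv ℝ ψ) := hψ.fderiv_right (by norm_num)
    have h2 := ((ContinuousLinearMap.apply ℝ (Fin n → ℝ) w).hasFDerivAt).comp z
      (h1.differentiable one_ne_zero z).hasFDerivAt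
    have h3 : fderiv ℝ (fun y => fderiv ℝ ψ y w) z = _ := h2.fderiv
    rw [h3]
    rfl
  unfold wave
  congr 2
  · exact key (0, 1)
  · exact key (1, 0)

lemma hasDerivAt_nullU (hψ : ContDiff ℝ 2 ψ) (u v : ℝ) :
    HasDerivAt (fun s => nullU t₀ ψ (u, s)) (wave ψ (ofNull t₀ (u, v))) v := by
  have h := ((hasDerivAt_fderiv_apply hψ (0, 1) (hasDerivAt_ofNull_v t₀ u v)).add
    (hasDerivAt_fderiv_apply hψ (1, 0) (hasDerivAt_ofNull_v t₀ u v))).const_smul (1 / 2 : ℝ)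
  refine h.congr_deriv ?_
  rw [wave_eq hψ, vec_v]
  simp only [map_smul, map_sub, smul_apply, sub_apply]
  rw [fderiv_fderiv_symm hψ _ (1, 0) (0, 1)]
  module

lemma hasDerivAt_nullV (hψ : ContDiff ℝ 2 ψ) (u v : ℝ) :
    HasDerivAt (fun s => nullV t₀ ψ (s, v)) (wave ψ (ofNull t₀ (u, v))) u := by
  have h := ((hasDerivAt_fderiv_apply hψ (0, 1) (hasDerivAt_ofNull_u t₀ u v)).sub
    (hasDerivAt_fderiv_apply hψ (1, 0) (hasDerivAt_ofNull_u t₀ u v))).const_smul (1 / 2 : ℝ)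
  refine h.congr_deriv ?_
  rw [wave_eq hψ, vec_u]
  simp only [map_smul, map_add, smul_apply, add_apply]
  rw [fderiv_fderiv_symm hψ _ (1, 0) (0, 1)]
  module

lemma sum_sum_eq_zero_of_antisymm {D : Fin n → Fin n → ℝ} (h : ∀ B C, D B C = -D C B) :
    ∑ B, ∑ C, D B C = 0 := by
  have h1 : ∑ B, ∑ C, D B C = -∑ B, ∑ C, D B C := by
    conv_lhs => rw [Finset.sum_comm]
    simp only [← Finset.sum_neg_distrib]
    exact Finset.sum_congr rfl fun B _ => Finset.sum_congr rfl fun C _ => h C B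
  linarith

/-- The quadratic part of the torsion wave map equation in null components. -/
lemma quadratic_eq (hgsymm : ∀ q, (g q).IsSymm) (hpskew : ∀ q, (p q).transpose = -p q)
    (lam vy : ℝ) (q X T : Fin n → ℝ) (A : Fin n) :
    (∑ B, ∑ C, Gamma g ginv A B C q * (X B * X C - T B * T C)) +
      2 * lam * vy * (∑ B, ∑ C, Tor ginv p A B C q * (X B * T C)) =
    4 * nonlin g ginv p (lam * vy) q ((1 / 2 : ℝ) • (T + X)) ((1 / 2 : ℝ) • (T - X)) A := by
  rw [← sub_eq_zero]
  simp only [nonlin, Finset.mul_sum, ← Finset.sum_add_distrib, ← Finset.sum_sub_distrib]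
  refine sum_sum_eq_zero_of_antisymm fun B C => ?_
  simp only [coef, Gamma_symm hgsymm A B C, Tor_antisymm hpskew A B C, Pi.smul_apply,
    Pi.add_apply, Pi.sub_apply, smul_eq_mul]
  ring

/-- The reduced torsion wave map equation on all of `ℝ × ℝ` is the first-order system in null
coordinates. -/
lemma isNullSol_iff (hgsymm : ∀ q, (g q).IsSymm) (hpskew : ∀ q, (p q).transpose = -p q)
    (lam vy : ℝ) (hψ : ContDiff ℝ 2 ψ) :
    IsNullSol g ginv p (lam * vy) (fun z => ψ (ofNull t₀ z)) (nullU t₀ ψ) (nullV t₀ ψ) ↔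
    ∀ x t : ℝ, ∀ A : Fin n,
        pdx (pdx ψ) (x, t) A - pdt (pdt ψ) (x, t) A
          + (∑ B, ∑ C, Gamma g ginv A B C (ψ (x, t)) *
              (pdx ψ (x, t) B * pdx ψ (x, t) C - pdt ψ (x, t) B * pdt ψ (x, t) C))
          + 2 * lam * vy * (∑ B, ∑ C, Tor ginv p A B C (ψ (x, t)) *
              (pdx ψ (x, t) B * pdt ψ (x, t) C)) = 0 := by
  have hw : ∀ z A, wave ψ z A = (1 / 4) * (pdt (pdt ψ) z A - pdx (pdx ψ) z A) := fun _ _ => rfl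
  constructor
  · intro h x t A
    rw [add_assoc, quadratic_eq hgsymm hpskew]
    have h1 := (hasDerivAt_nullU t₀ hψ _ _).unique
      (h.derA (toNull t₀ (x, t)).1 (toNull t₀ (x, t)).2)
    have h2 := congrFun h1 A
    simp only [Prod.mk.eta, ofNull_toNull, nullU, nullV] at h2
    rw [hw] at h2
    linarith
  · intro h
    have h1 : ∀ z, wave ψ (ofNull t₀ z) = nonlin g ginv p (lam * vy) (ψ (ofNull t₀ z))
        (nullU t₀ ψ z) (nullV t₀ ψ z) := fun z => by
      funext A
      have := h (ofNull t₀ z).1 (ofNull t₀ z).2 A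
      rw [add_assoc, quadratic_eq hgsymm hpskew] at this
      rw [hw, nullU, nullV]
      simp only [Prod.mk.eta] at this
      linarith
    exact ⟨hasDerivAt_u t₀ hψ, hasDerivAt_v t₀ hψ,
      fun u v => (hasDerivAt_nullU t₀ hψ u v).congr_deriv (h1 (u, v)),
      fun u v => (hasDerivAt_nullV t₀ hψ u v).congr_deriv (h1 (u, v))⟩

lemma continuous_nullU (hψ : ContDiff ℝ 2 ψ) : Continuous (nullU t₀ ψ) := by
  have h := (hψ.continuous_fderiv two_ne_zero).comp (contDiff_ofNull t₀ (k := 0)).continuous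
  exact ((h.clm_apply continuous_const).add (h.clm_apply continuous_const)).const_smul (1 / 2 : ℝ)

lemma continuous_nullV (hψ : ContDiff ℝ 2 ψ) : Continuous (nullV t₀ ψ) := by
  have h := (hψ.continuous_fderiv two_ne_zero).comp (contDiff_ofNull t₀ (k := 0)).continuous
  exact ((h.clm_apply continuous_const).sub (h.clm_apply continuous_const)).const_smul (1 / 2 : ℝ)

lemma pdx_eq_deriv (hψ : ContDiff ℝ 2 ψ) (x t : ℝ) :
    pdx ψ (x, t) = deriv (fun s => ψ (s, t)) x :=
  (((hψ.differentiable two_ne_zero (x, t)).hasFDerivAt).comp_hasDerivAt x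
    ((hasDerivAt_id x).prodMk (hasDerivAt_const x t))).deriv.symm

/-- Two solutions with the same Cauchy data solve the same characteristic initial value problem. -/
lemma solution_unique (hg : HasBddDerivs g) (hginv : HasBddDerivs ginv) (hp : HasBddDerivs p)
    (κ : ℝ) {ψ ψ' : ℝ × ℝ → Fin n → ℝ} (hψ : ContDiff ℝ 2 ψ) (hψ' : ContDiff ℝ 2 ψ')
    (h : IsNullSol g ginv p κ (fun z => ψ (ofNull t₀ z)) (nullU t₀ ψ) (nullV t₀ ψ))
    (h' : IsNullSol g ginv p κ (fun z => ψ' (ofNull t₀ z)) (nullU t₀ ψ') (nullV t₀ ψ'))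
    (h0 : ∀ x, ψ (x, t₀) = ψ' (x, t₀)) (h1 : ∀ x, pdt ψ (x, t₀) = pdt ψ' (x, t₀)) :
    ψ = ψ' := by
  have h2 : ∀ x, pdx ψ (x, t₀) = pdx ψ' (x, t₀) := fun x => by
    rw [pdx_eq_deriv hψ, pdx_eq_deriv hψ', funext h0]
  let Q : ((Fin n → ℝ) × (Fin n → ℝ)) × (Fin n → ℝ) → Fin n → ℝ := fun z =>
    nonlin g ginv p κ z.1.1 z.1.2 z.2
  have hQ : ContDiff ℝ (⊤ : ℕ∞) Q := contDiff_nonlin hg hginv hp κ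
    (contDiff_fst.comp contDiff_fst) (contDiff_snd.comp contDiff_fst) contDiff_snd
  have hP : ContDiff ℝ (⊤ : ℕ∞) fun z => (z.2, Q z) := contDiff_snd.prodMk hQ
  have key : ∀ {ψ : ℝ × ℝ → Fin n → ℝ}, ContDiff ℝ 2 ψ →
      IsNullSol g ginv p κ (fun z => ψ (ofNull t₀ z)) (nullU t₀ ψ) (nullV t₀ ψ) →
      IsCharSol (fun z => (z.2, Q z)) Q (fun z => (ψ (ofNull t₀ z), nullU t₀ ψ z))
        (nullV t₀ ψ) := fun {ψ} hψ h =>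
    { contY := (hψ.continuous.comp (contDiff_ofNull t₀ (k := 0)).continuous).prodMk
        (continuous_nullU t₀ hψ)
      contZ := continuous_nullV t₀ hψ
      derY := fun u v => (h.derV u v).prodMk (h.derA u v)
      derZ := fun u v => h.derB u v }
  have hY := (key hψ h).unique (hP.of_le (WithTop.coe_le_coe.2 le_top))
    (hQ.of_le (WithTop.coe_le_coe.2 le_top)) (key hψ' h') (fun u => by
      simp only [nullU, ofNull_diag, h0, h1, h2]) (fun v => by
      have e : ofNull t₀ (-v, v) = (-v, t₀) := by simpa using ofNull_diag t₀ (-v)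
      simp only [nullV, e, h1, h2])
  funext z
  have := congrArg Prod.fst (congrFun hY (toNull t₀ z))
  simpa only [ofNull_toNull] using this

end

/-! ### The theorem -/

/-- **Global existence for translation-invariant torsion wave maps.** -/
theorem global_existence_invariant_torsion_wave_maps
    {n : ℕ}
    -- the metric `g`, its pointwise inverse `ginv`, and the torsion potential `p`
    (g ginv p : (Fin n → ℝ) → Matrix (Fin n) (Fin n) ℝ)
    (hg : ContDiff ℝ (⊤ : ℕ∞) g) (hginv : ContDiff ℝ (⊤ : ℕ∞) ginv)
    (hp : ContDiff ℝ (⊤ : ℕ∞) p)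
    (hgpos : ∀ q, (g q).PosDef)
    (hgsymm : ∀ q, (g q).IsSymm)
    (hinv : ∀ q, g q * ginv q = 1 ∧ ginv q * g q = 1)
    (hpskew : ∀ q, (p q).transpose = - p q)
    -- boundedness of `g`, `g⁻¹`, `p` and all their derivatives
    (hgbd : ∀ k : ℕ, ∃ Cb : ℝ, ∀ q, ‖iteratedFDeriv ℝ k g q‖ ≤ Cb)
    (hginvbd : ∀ k : ℕ, ∃ Cb : ℝ, ∀ q, ‖iteratedFDeriv ℝ k ginv q‖ ≤ Cb)
    (hpbd : ∀ k : ℕ, ∃ Cb : ℝ, ∀ q, ‖iteratedFDeriv ℝ k p q‖ ≤ Cb)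
    -- fixed constants: the coupling constant and the `y`-component of `v`
    (lam vy : ℝ)
    -- initial data at time `t₀`
    (t₀ : ℝ) (φhat θhat : ℝ → (Fin n → ℝ))
    (hφhat : ContDiff ℝ (⊤ : ℕ∞) φhat)
    (hφhatconst : ∃ c : Fin n → ℝ, ∃ Kc : Set ℝ, IsCompact Kc ∧ ∀ x ∉ Kc, φhat x = c)
    (hθhat : ContDiff ℝ (⊤ : ℕ∞) θhat)
    (hθhatsupp : HasCompactSupport θhat) :
    ∃! φ : ℝ × ℝ → (Fin n → ℝ),
      ContDiff ℝ (⊤ : ℕ∞) φ ∧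
      (∀ x t : ℝ, ∀ A : Fin n,
        pdx (pdx φ) (x, t) A - pdt (pdt φ) (x, t) A
          + (∑ B, ∑ C, Gamma g ginv A B C (φ (x, t)) *
              (pdx φ (x, t) B * pdx φ (x, t) C - pdt φ (x, t) B * pdt φ (x, t) C))
          + 2 * lam * vy * (∑ B, ∑ C, Tor ginv p A B C (φ (x, t)) *
              (pdx φ (x, t) B * pdt φ (x, t) C)) = 0) ∧
      (∀ x : ℝ, φ (x, t₀) = φhat x ∧ pdt φ (x, t₀) = θhat x) := by
  have Hg : HasBddDerivs g := ⟨hg, hgbd⟩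
  have Hginv : HasBddDerivs ginv := ⟨hginv, hginvbd⟩
  have Hp : HasBddDerivs p := ⟨hp, hpbd⟩
  have hle : (2 : WithTop ℕ∞) ≤ ((⊤ : ℕ∞) : WithTop ℕ∞) := WithTop.coe_le_coe.2 le_top
  have hd : ContDiff ℝ (⊤ : ℕ∞) (deriv φhat) := by
    refine ContDiff.deriv' (n := ((⊤ : ℕ∞) : WithTop ℕ∞)) ?_
    exact_mod_cast hφhat
  have hder : ∀ x, HasDerivAt φhat (deriv φhat x) x := fun x =>
    (hφhat.differentiable (by simp) x).hasDerivAt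
  have hds : HasCompactSupport (deriv φhat) := by
    obtain ⟨c, Kc, hKc, hc⟩ := hφhatconst
    have h1 : HasCompactSupport fun x => φhat x - c :=
      HasCompactSupport.intro hKc fun x hx => by rw [hc x hx, sub_self]
    have h2 : deriv (fun x => φhat x - c) = deriv φhat := funext fun x => deriv_sub_const c
    exact h2 ▸ h1.deriv
  obtain ⟨C₁, hC₁⟩ := hds.exists_bound_of_continuous hd.continuous
  obtain ⟨C₂, hC₂⟩ := hθhatsupp.exists_bound_of_continuous hθhat.continuous
  obtain ⟨φ, a, b, hφ, hsol, h₀, ha₀, hb₀⟩ := exists_isNullSol Hg Hginv Hp hgpos hgsymm hinv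
    hpskew (lam * vy) hφhat (a₀ := fun u => (1 / 2 : ℝ) • (θhat u + deriv φhat u))
    (b₀ := fun v => (1 / 2 : ℝ) • (θhat (-v) - deriv φhat (-v)))
    ((hθhat.add hd).const_smul _)
    (((hθhat.comp contDiff_neg).sub (hd.comp contDiff_neg)).const_smul _) (A₀ := C₂ + C₁)
    (fun u => by
      rw [norm_smul]
      have h1 := norm_add_le (θhat u) (deriv φhat u)
      have h2 := hC₁ u
      have h3 := hC₂ u
      have h4 : ‖(1 / 2 : ℝ)‖ = 1 / 2 := by norm_num
      rw [h4]
      linarith [norm_nonneg (θhat u), norm_nonneg (deriv φhat u)])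
    (fun v => by
      rw [norm_smul]
      have h1 := norm_sub_le (θhat (-v)) (deriv φhat (-v))
      have h2 := hC₁ (-v)
      have h3 := hC₂ (-v)
      have h4 : ‖(1 / 2 : ℝ)‖ = 1 / 2 := by norm_num
      rw [h4]
      linarith [norm_nonneg (θhat (-v)), norm_nonneg (deriv φhat (-v))])
    (fun u => (hder u).congr_deriv (by simp only [neg_neg]; module))
  have hψ : ContDiff ℝ (⊤ : ℕ∞) fun z => φ (toNull t₀ z) := hφ.comp (contDiff_toNull t₀)
  have hψφ : (fun z => φ (toNull t₀ (ofNull t₀ z))) = φ :=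
    funext fun z => by rw [toNull_ofNull]
  -- The auxiliary unknowns `a`, `b` are the null derivatives of the solution.
  have hψa : nullU t₀ (fun z => φ (toNull t₀ z)) = a := funext fun z =>
    (hasDerivAt_u t₀ (hψ.of_le hle) z.1 z.2).unique
      (by simpa only [toNull_ofNull] using hsol.derU z.1 z.2)
  have hψb : nullV t₀ (fun z => φ (toNull t₀ z)) = b := funext fun z =>
    (hasDerivAt_v t₀ (hψ.of_le hle) z.1 z.2).unique
      (by simpa only [toNull_ofNull] using hsol.derV z.1 z.2)
  have heqn := (isNullSol_iff t₀ hgsymm hpskew lam vy (hψ.of_le hle)).1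
    (by rw [hψφ, hψa, hψb]; exact hsol)
  have hi₀ : ∀ x, φ (toNull t₀ (x, t₀)) = φhat x := fun x => by
    have : toNull t₀ (x, t₀) = (x, -x) := by simp [toNull]
    rw [this, h₀]
  have hi₁ : ∀ x, pdt (fun z => φ (toNull t₀ z)) (x, t₀) = θhat x := fun x => by
    have h1 := congrFun hψa (x, -x)
    have h2 := congrFun hψb (x, -x)
    have h3 : b (x, -x) = (1 / 2 : ℝ) • (θhat x - deriv φhat x) := by simpa using hb₀ (-x)
    rw [ha₀, nullU, ofNull_diag] at h1
    rw [h3, nullV, ofNull_diag] at h2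
    have h4 := congrArg₂ (· + ·) h1 h2
    simp only [← smul_add] at h4
    have h5 := smul_right_injective (Fin n → ℝ) (show (1 / 2 : ℝ) ≠ 0 by norm_num) h4
    simp only [add_add_sub_cancel, ← two_smul ℝ] at h5
    exact smul_right_injective (Fin n → ℝ) (show (2 : ℝ) ≠ 0 by norm_num) h5
  refine ⟨fun z => φ (toNull t₀ z), ⟨hψ, heqn, fun x => ⟨hi₀ x, hi₁ x⟩⟩, ?_⟩
  rintro ψ ⟨hψ', heq, hdata⟩
  exact solution_unique t₀ Hg Hginv Hp (lam * vy) (hψ'.of_le hle) (hψ.of_le hle)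
    ((isNullSol_iff t₀ hgsymm hpskew lam vy (hψ'.of_le hle)).2 heq)
    (by rw [hψφ, hψa, hψb]; exact hsol) (fun x => (hdata x).1.trans (hi₀ x).symm)
    fun x => (hdata x).2.trans (hi₁ x).symm

end
end

section
/- Proposition A, part 3 (no torsion in three dimensions). Let 𝔤 be a 3-dimensional real semisimple Lie algebra. Then for every skew-symmetric bilinear form p on 𝔤, the torsion form T_p(u,v,w) := p([u,v],w) + p([v,w],u) + p([w,u],v) is identically zero. -/
/-!
A Lie algebra with nondegenerate Killing form is unimodular: `trace (ad v) = 0` for all `v`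
(`trace_ad_eq_zero`). In dimension three the torsion form `T_p` of a skew form `p` is an alternating
3-form on a 3-dimensional space, so it is determined by its value on a basis `e`. Expanding the
brackets in `e` and using skew-symmetry gives
`T_p(e₀, e₁, e₂) = tr(ad e₂) p(e₀, e₁) + tr(ad e₀) p(e₁, e₂) + tr(ad e₁) p(e₂, e₀)`,
which is zero by unimodularity.
-/

noncomputable section

/-- The Killing form `κ(u,v) = trace(ad u ∘ ad v)` of a Lie algebra. -/
def killing (𝓖 : Type*) [LieRing 𝓖] [LieAlgebra ℝ 𝓖] (u v : 𝓖) : ℝ :=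
  LinearMap.trace ℝ 𝓖 ((LieAlgebra.ad ℝ 𝓖 u) ∘ₗ (LieAlgebra.ad ℝ 𝓖 v))

/-- Unimodularity. If `z` represents the functional `v ↦ trace (ad v)` with respect to the Killing
form, then invariance and the vanishing of traces of commutators make `z` central, so
`trace (ad v) = κ(z, v) = 0`. -/
lemma trace_ad_eq_zero {𝓖 : Type*} [LieRing 𝓖] [LieAlgebra ℝ 𝓖] [FiniteDimensional ℝ 𝓖]
    (hnondeg : ∀ u : 𝓖, (∀ v : 𝓖, killing 𝓖 u v = 0) → u = 0) (v : 𝓖) :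
    LinearMap.trace ℝ 𝓖 (LieAlgebra.ad ℝ 𝓖 v) = 0 := by
  have hinj : Function.Injective (killingForm ℝ 𝓖) :=
    (injective_iff_map_eq_zero _).2 fun u hu => hnondeg u fun v => LinearMap.congr_fun hu v
  have hsurj : Function.Surjective (killingForm ℝ 𝓖) :=
    (LinearMap.injective_iff_surjective_of_finrank_eq_finrank
      (Subspace.dual_finrank_eq (K := ℝ) (V := 𝓖)).symm).1 hinj
  obtain ⟨z, hz⟩ := hsurj
    { toFun := fun x => LinearMap.trace ℝ 𝓖 (LieAlgebra.ad ℝ 𝓖 x)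
      map_add' := by simp
      map_smul' := by simp }
  have hz' : ∀ x, killingForm ℝ 𝓖 z x = LinearMap.trace ℝ 𝓖 (LieAlgebra.ad ℝ 𝓖 x) :=
    fun x => LinearMap.congr_fun hz x
  have hc : ∀ u : 𝓖, ⁅z, u⁆ = 0 := fun u => hnondeg _ fun x => by
    have had : LieAlgebra.ad ℝ 𝓖 ⁅u, x⁆ = LieAlgebra.ad ℝ 𝓖 u * LieAlgebra.ad ℝ 𝓖 x
        - LieAlgebra.ad ℝ 𝓖 x * LieAlgebra.ad ℝ 𝓖 u := by
      ext y
      simp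
    change killingForm ℝ 𝓖 ⁅z, u⁆ x = 0
    rw [LieModule.traceForm_apply_lie_apply, hz', had, map_sub, LinearMap.trace_mul_comm, sub_self]
  have hz0 : z = 0 := hnondeg z fun x => by
    have : LieAlgebra.ad ℝ 𝓖 z = 0 := LinearMap.ext hc
    simp [killing, this]
  rw [← hz', hz0, map_zero, LinearMap.zero_apply]

/-- **Proposition A, part 3: no torsion in three dimensions.** -/
theorem no_torsion_in_three_dimensions
    {𝓖 : Type*} [LieRing 𝓖] [LieAlgebra ℝ 𝓖] [FiniteDimensional ℝ 𝓖]
    -- `𝓖` is semisimple: `κ` is nondegenerate (Cartan's criterion)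
    (hnondeg : ∀ u : 𝓖, (∀ v : 𝓖, killing 𝓖 u v = 0) → u = 0)
    -- `dim 𝓖 = 3`
    (hdim : Module.finrank ℝ 𝓖 = 3) :
    ∀ p : 𝓖 →ₗ[ℝ] 𝓖 →ₗ[ℝ] ℝ, (∀ u v : 𝓖, p u v = - p v u) →
      ∀ u v w : 𝓖, p ⁅u, v⁆ w + p ⁅v, w⁆ u + p ⁅w, u⁆ v = 0 := by
  intro p hp u v w
  let e := Module.finBasisOfFinrankEq ℝ 𝓖 hdim
  have hdiag : ∀ x, p x x = 0 := fun x => by linarith [hp x x]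
  have htr : ∀ x, e.repr ⁅x, e 0⁆ 0 + e.repr ⁅x, e 1⁆ 1 + e.repr ⁅x, e 2⁆ 2 = 0 := fun x => by
    have h := trace_ad_eq_zero hnondeg x
    rw [LinearMap.trace_eq_matrix_trace ℝ e, Matrix.trace, Fin.sum_univ_three] at h
    simpa [LinearMap.toMatrix_apply] using h
  have hexp : ∀ x y, p x y = e.repr x 0 * p (e 0) y + e.repr x 1 * p (e 1) y
      + e.repr x 2 * p (e 2) y := fun x y => by
    conv_lhs => rw [← e.sum_repr x, Fin.sum_univ_three]
    simp only [map_add, map_smul, LinearMap.add_apply, LinearMap.smul_apply, smul_eq_mul]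
  have h10 : ⁅e 1, e 0⁆ = -⁅e 0, e 1⁆ := (lie_skew _ _).symm
  have h21 : ⁅e 2, e 1⁆ = -⁅e 1, e 2⁆ := (lie_skew _ _).symm
  have h02 : ⁅e 0, e 2⁆ = -⁅e 2, e 0⁆ := (lie_skew _ _).symm
  have hbasis : p ⁅e 0, e 1⁆ (e 2) + p ⁅e 1, e 2⁆ (e 0) + p ⁅e 2, e 0⁆ (e 1) = 0 := by
    have t0 := htr (e 0)
    have t1 := htr (e 1)
    have t2 := htr (e 2)
    simp only [h10, h21, h02, lie_self, map_neg, map_zero, Finsupp.neg_apply,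
      Finsupp.zero_apply] at t0 t1 t2
    rw [hexp ⁅e 0, e 1⁆, hexp ⁅e 1, e 2⁆, hexp ⁅e 2, e 0⁆, hdiag, hdiag, hdiag,
      hp (e 0) (e 2), hp (e 1) (e 0), hp (e 2) (e 1)]
    linear_combination p (e 0) (e 1) * t2 + p (e 1) (e 2) * t0 + p (e 2) (e 0) * t1
  -- The torsion form at `(u, v, w)` is the coordinate determinant times its value on the basis.
  rw [← e.sum_repr u, ← e.sum_repr v, ← e.sum_repr w]
  generalize e.repr u = a, e.repr v = b, e.repr w = c
  simp only [Fin.sum_univ_three, add_lie, lie_add, smul_lie, lie_smul, lie_self, h10, h21, h02,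
    map_add, map_smul, map_neg, map_zero, LinearMap.add_apply, LinearMap.smul_apply,
    LinearMap.neg_apply, LinearMap.zero_apply, smul_eq_mul, smul_neg, smul_zero]
  linear_combination (a 0 * (b 1 * c 2 - b 2 * c 1) - a 1 * (b 0 * c 2 - b 2 * c 0)
    + a 2 * (b 0 * c 1 - b 1 * c 0)) * hbasis

end
end
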